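/- arXiv:2507.12096 — 7 statements merged into one kernel-verified Lean document; each statement's English description precedes it below -/
import Mathlib

section
/- Let G be a digraph, s, t1, t2 ∈ V(G) with s ∉ {t1, t2}, and let c_0, c_1, …, c_k be a sequence of cut vertices between s and t1, t2 whose entries are pairwise distinct. For 0 ≤ i < k let R_i be the set of vertices of G lying on some directed path from c_i to c_{i+1}, and let R_k be the set of vertices lying on some directed path from c_k to t1 or on some directed path from c_k to t2. Then for all 0 ≤ i < j ≤ k: if j = i+1 then R_i ∩ R_j = {c_j}, and if j > i+1 then R_i ∩ R_j = ∅. -/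
/-- A digraph: a finite vertex set together with a set of edges,
which are ordered pairs of distinct vertices. -/
structure Dgraph (V : Type*) where
  verts : Set V
  Edge : V → V → Prop
  mem_of_edge : ∀ ⦃x y⦄, Edge x y → x ∈ verts ∧ y ∈ verts
  ne_of_edge : ∀ ⦃x y⦄, Edge x y → x ≠ y
  finite : verts.Finite

namespace Dgraph

variable {V : Type*}

/-- A directed path: a nonempty sequence of pairwise distinct vertices of `G`
in which each consecutive pair is joined by an edge of `G`. -/
def IsPath (G : Dgraph V) (p : List V) : Prop :=
  p ≠ [] ∧ p.Nodup ∧ p.Chain' G.Edge ∧ ∀ v ∈ p, v ∈ G.verts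

/-- A directed path from `a` to `b`. -/
def PathFrom (G : Dgraph V) (p : List V) (a b : V) : Prop :=
  G.IsPath p ∧ p.head? = some a ∧ p.getLast? = some b

/-- The internal vertices of a path (all vertices except the two endpoints). -/
def internals (p : List V) : List V := p.tail.dropLast

/-- Two paths are internally vertex-disjoint if no internal vertex of either
path lies on both paths. -/
def IntDisjoint (p q : List V) : Prop :=
  ∀ v, v ∈ internals p ∨ v ∈ internals q → ¬(v ∈ p ∧ v ∈ q)

/-- The digraph induced on `V(G) \ D`. -/
def delete (G : Dgraph V) (D : Set V) : Dgraph V where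
  verts := G.verts \ D
  Edge x y := G.Edge x y ∧ x ∉ D ∧ y ∉ D
  mem_of_edge := by
    intro x y h
    exact ⟨⟨(G.mem_of_edge h.1).1, h.2.1⟩, ⟨(G.mem_of_edge h.1).2, h.2.2⟩⟩
  ne_of_edge := by
    intro x y h
    exact G.ne_of_edge h.1
  finite := G.finite.diff

/-- `c 0, c 1, …, c k` is a sequence of cut vertices between `s` and `t1, t2`. -/
def IsCutSeq (G : Dgraph V) (s t1 t2 : V) (k : ℕ) (c : ℕ → V) : Prop :=
  c 0 = s ∧
  (∀ j < k,
    (∃ p q : List V, p ≠ q ∧ G.PathFrom p (c j) (c (j+1)) ∧ G.PathFrom q (c j) (c (j+1)) ∧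
      IntDisjoint p q) ∧
    (∀ p : List V, G.PathFrom p (c j) t1 ∨ G.PathFrom p (c j) t2 → c (j+1) ∈ p)) ∧
  ((c k = t1 ∧ t1 = t2) ∨
   (∃ p q : List V, G.PathFrom p (c k) t1 ∧ G.PathFrom q (c k) t2 ∧ IntDisjoint p q))

end Dgraph

/-!
A vertex `v ≠ c j` of `R j` can reach `{t1, t2}` avoiding `c j`, because no earlier cut vertex
separates a later one from the terminals. Now let `v` lie on a path `p` from `c i` to `c (i + 1)`
and also in `R j` with `i < j`. The part of `p` up to `v` must contain `c j`, since otherwise it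
would extend to a path from `c i` to a terminal avoiding `c j`. In the same way, the part of `p` up
to `c j` must contain `c (i + 1)`. But `c (i + 1)` is the last vertex of `p`, so both parts are all
of `p`, and `v = c (i + 1) = c j`.
-/

namespace Dgraph

section Paths

variable {V : Type*} {G : Dgraph V} {a b d v w : V} {p q : List V} {B : Set V}

theorem pathFrom_singleton (ha : a ∈ G.verts) : G.PathFrom [a] a a :=
  ⟨⟨List.cons_ne_nil _ _, List.nodup_singleton a, List.isChain_singleton a,
    fun _ hx => List.mem_singleton.1 hx ▸ ha⟩, rfl, rfl⟩

theorem PathFrom.head_mem (h : G.PathFrom p a b) : a ∈ p := List.mem_of_head? h.2.1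

theorem PathFrom.last_mem (h : G.PathFrom p a b) : b ∈ p := List.mem_of_getLast? h.2.2

theorem PathFrom.nodup (h : G.PathFrom p a b) : p.Nodup := h.1.2.1

theorem PathFrom.isChain (h : G.PathFrom p a b) : p.IsChain G.Edge := h.1.2.2.1

theorem PathFrom.mem_verts (h : G.PathFrom p a b) (hv : v ∈ p) : v ∈ G.verts := h.1.2.2.2 v hv

theorem PathFrom.cons (h : G.PathFrom p b d) (hab : G.Edge a b) (hap : a ∉ p) :
    G.PathFrom (a :: p) a d := by
  refine ⟨⟨List.cons_ne_nil _ _, List.nodup_cons.2 ⟨hap, h.nodup⟩, ?_, ?_⟩, rfl, ?_⟩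
  · refine List.isChain_cons.2 ⟨fun y hy => ?_, h.isChain⟩
    rw [h.2.1, Option.mem_some_iff] at hy
    exact hy ▸ hab
  · exact List.forall_mem_cons.2 ⟨(G.mem_of_edge hab).1, h.1.2.2.2⟩
  · rw [List.getLast?_cons, h.2.2, Option.getD_some]

theorem PathFrom.exists_prefix (h : G.PathFrom p a b) (hv : v ∈ p) :
    ∃ q, q <+: p ∧ G.PathFrom q a v := by
  obtain ⟨l₁, l₂, rfl⟩ := List.append_of_mem hv
  have hpre : l₁ ++ [v] <+: l₁ ++ v :: l₂ := ⟨l₂, by simp⟩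
  refine ⟨l₁ ++ [v], hpre, ⟨by simp, h.nodup.sublist hpre.sublist, h.isChain.prefix hpre,
    fun x hx => h.mem_verts (hpre.subset hx)⟩, ?_, by simp⟩
  rw [← h.2.1]
  cases l₁ <;> rfl

theorem PathFrom.exists_suffix (h : G.PathFrom p a b) (hv : v ∈ p) :
    ∃ q, q <:+ p ∧ G.PathFrom q v b := by
  obtain ⟨l₁, l₂, rfl⟩ := List.append_of_mem hv
  have hsuf : v :: l₂ <:+ l₁ ++ v :: l₂ := List.suffix_append l₁ (v :: l₂)
  refine ⟨v :: l₂, hsuf, ⟨by simp, h.nodup.sublist hsuf.sublist, h.isChain.suffix hsuf,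
    fun x hx => h.mem_verts (hsuf.subset hx)⟩, rfl, ?_⟩
  rw [← h.2.2, List.getLast?_append_cons]

theorem PathFrom.eq_of_last_mem_prefix (h : G.PathFrom p a b) (hqp : q <+: p)
    (hq : G.PathFrom q a v) (hb : b ∈ q) : v = b := by
  obtain ⟨r, rfl⟩ := hqp
  rcases r.eq_nil_or_concat with rfl | ⟨r, x, rfl⟩
  · simpa [hq.2.2] using h.2.2
  · have hxb : x = b := by simpa using h.2.2
    exact (List.disjoint_of_nodup_append h.nodup hb (by simp [hxb])).elim

theorem PathFrom.eq_of_head_mem_suffix (h : G.PathFrom p a b) (hqp : q <:+ p)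
    (hq : G.PathFrom q v b) (ha : a ∈ q) : v = a := by
  obtain ⟨r, rfl⟩ := hqp
  rcases r with _ | ⟨x, r⟩
  · simpa [hq.2.1] using h.2.1
  · have hxa : x = a := by simpa using h.2.1
    exact (List.disjoint_of_nodup_append h.nodup (by simp [hxa]) ha).elim

theorem PathFrom.exists_trans (hp : G.PathFrom p a b) (hq : G.PathFrom q b d) :
    ∃ r, G.PathFrom r a d ∧ r ⊆ p ++ q := by
  induction p generalizing a with
  | nil => exact absurd rfl hp.1.1
  | cons x l ih =>
    obtain rfl : x = a := by simpa using hp.2.1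
    by_cases hxq : x ∈ q
    · obtain ⟨r, hrq, hr⟩ := hq.exists_suffix hxq
      exact ⟨r, hr, List.subset_append_of_subset_right _ hrq.subset⟩
    · rcases l with _ | ⟨z, l⟩
      · exact absurd (List.mem_singleton.1 hp.last_mem ▸ hq.head_mem) hxq
      · have htail : G.PathFrom (z :: l) z b :=
          ⟨⟨by simp, hp.nodup.of_cons, hp.isChain.of_cons,
            fun y hy => hp.mem_verts (List.mem_cons_of_mem x hy)⟩, rfl, by simpa using hp.2.2⟩
        obtain ⟨r, hr, hrl⟩ := ih htail
        have hxr : x ∉ r := fun hx =>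
          (List.mem_append.1 (hrl hx)).elim (List.nodup_cons.1 hp.nodup).1 hxq
        have hxz : G.Edge x z := (List.isChain_cons_cons.1 hp.isChain).1
        exact ⟨x :: r, hr.cons hxz hxr, List.cons_subset_cons x hrl⟩

theorem PathFrom.mem_internals (h : G.PathFrom p a b) (hv : v ∈ p) (hva : v ≠ a) (hvb : v ≠ b) :
    v ∈ internals p := by
  rcases p with _ | ⟨x, l⟩
  · exact absurd rfl h.1.1
  obtain rfl : x = a := by simpa using h.2.1
  have hvl : v ∈ l := List.mem_of_ne_of_mem hva hv
  rcases l.eq_nil_or_concat with rfl | ⟨l, y, rfl⟩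
  · exact absurd hvl List.not_mem_nil
  obtain rfl : y = b := by simpa [List.getLast?_cons] using h.2.2
  simpa [internals, hvb] using hvl

theorem IntDisjoint.notMem_or_notMem (hpq : IntDisjoint p q) (hp : G.PathFrom p a b)
    (hwa : w ≠ a) (hwb : w ≠ b) : w ∉ p ∨ w ∉ q :=
  or_iff_not_and_not.2 fun ⟨hwp, hwq⟩ =>
    hpq w (.inl (hp.mem_internals (not_not.1 hwp) hwa hwb)) ⟨not_not.1 hwp, not_not.1 hwq⟩

/-- Some directed path from `a` to a vertex of `B` does not contain `w`, i.e. `w` does not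
separate `a` from `B`. The endpoints count as vertices of the path, so this forces `a ≠ w`. -/
def ReachesAvoiding (G : Dgraph V) (a : V) (B : Set V) (w : V) : Prop :=
  ∃ b ∈ B, ∃ p, G.PathFrom p a b ∧ w ∉ p

theorem ReachesAvoiding.of_pathFrom (hp : G.PathFrom p a b) (hwp : w ∉ p)
    (h : G.ReachesAvoiding b B w) : G.ReachesAvoiding a B w := by
  obtain ⟨t, ht, q, hq, hwq⟩ := h
  obtain ⟨r, hr, hrpq⟩ := hp.exists_trans hq
  exact ⟨t, ht, r, hr, fun hw => (List.mem_append.1 (hrpq hw)).elim hwp hwq⟩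

/-- The set of vertices lying on some directed path from `a` to a vertex of `B`; the regions `R i`
are of this form. -/
def pathSpan (G : Dgraph V) (a : V) (B : Set V) : Set V :=
  {v | ∃ b ∈ B, ∃ p, G.PathFrom p a b ∧ v ∈ p}

theorem reachesAvoiding_of_mem_pathSpan (hv : v ∈ G.pathSpan a B) (hva : v ≠ a) :
    G.ReachesAvoiding v B a := by
  obtain ⟨b, hb, p, hp, hvp⟩ := hv
  obtain ⟨q, hqp, hq⟩ := hp.exists_suffix hvp
  exact ⟨b, hb, q, hq, fun ha => hva (hp.eq_of_head_mem_suffix hqp hq ha)⟩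

end Paths

section CutSequences

variable {V : Type*} {G : Dgraph V} {s t1 t2 v : V} {k i j l m : ℕ} {c : ℕ → V} {p : List V}

/-- The region `R i` of a sequence `c 0, …, c k` with terminals `t1, t2`. Indices `i ≥ k` all give
the last region `R k`. -/
def region (G : Dgraph V) (t1 t2 : V) (k : ℕ) (c : ℕ → V) (i : ℕ) : Set V :=
  if i < k then G.pathSpan (c i) {c (i + 1)} else G.pathSpan (c k) {t1, t2}

theorem region_of_lt (hi : i < k) :
    G.region t1 t2 k c i = {v | ∃ p, G.PathFrom p (c i) (c (i + 1)) ∧ v ∈ p} := by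
  simp [region, pathSpan, hi]

theorem region_self : G.region t1 t2 k c k =
    {v | ∃ p, (G.PathFrom p (c k) t1 ∨ G.PathFrom p (c k) t2) ∧ v ∈ p} := by
  simp [region, pathSpan, or_and_right, exists_or]

namespace IsCutSeq

theorem exists_intDisjoint (h : G.IsCutSeq s t1 t2 k c) (hj : j < k) :
    ∃ p q, G.PathFrom p (c j) (c (j + 1)) ∧ G.PathFrom q (c j) (c (j + 1)) ∧ IntDisjoint p q := by
  obtain ⟨p, q, -, hpq⟩ := (h.2.1 j hj).1
  exact ⟨p, q, hpq⟩

theorem mem_verts (h : G.IsCutSeq s t1 t2 k c) (hk : 0 < k) (hj : j ≤ k) : c j ∈ G.verts := by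
  rcases j with _ | j
  · obtain ⟨p, -, hp, -⟩ := h.exists_intDisjoint hk
    exact hp.mem_verts hp.head_mem
  · obtain ⟨p, -, hp, -⟩ := h.exists_intDisjoint hj
    exact hp.mem_verts hp.last_mem

theorem exists_intDisjoint_last (h : G.IsCutSeq s t1 t2 k c) (hk : 0 < k) :
    ∃ p q, G.PathFrom p (c k) t1 ∧ G.PathFrom q (c k) t2 ∧ IntDisjoint p q := by
  rcases h.2.2 with ⟨rfl, rfl⟩ | hpq
  · have hsingle := pathFrom_singleton (h.mem_verts hk le_rfl)
    exact ⟨_, _, hsingle, hsingle, by simp [IntDisjoint, internals]⟩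
  · exact hpq

theorem mem_region_self (h : G.IsCutSeq s t1 t2 k c) (hk : 0 < k) (hj : j ≤ k) :
    c j ∈ G.region t1 t2 k c j := by
  rcases hj.lt_or_eq with hj | rfl
  · obtain ⟨p, -, hp, -⟩ := h.exists_intDisjoint hj
    exact region_of_lt hj ▸ ⟨p, hp, hp.head_mem⟩
  · obtain ⟨p, -, hp, -⟩ := h.exists_intDisjoint_last hk
    exact region_self ▸ ⟨p, .inl hp, hp.head_mem⟩

theorem succ_mem_region (h : G.IsCutSeq s t1 t2 k c) (hi : i < k) :
    c (i + 1) ∈ G.region t1 t2 k c i := by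
  obtain ⟨p, -, hp, -⟩ := h.exists_intDisjoint hi
  exact region_of_lt hi ▸ ⟨p, hp, hp.last_mem⟩

theorem mem_of_pathFrom_terminal (h : G.IsCutSeq s t1 t2 k c) (hml : m < l) (hl : l ≤ k) {t : V}
    (ht : t ∈ ({t1, t2} : Set V)) (hp : G.PathFrom p (c m) t) : c l ∈ p := by
  have next_mem {j : ℕ} {q : List V} (hj : j < k) (hq : G.PathFrom q (c j) t) : c (j + 1) ∈ q :=
    (h.2.1 j hj).2 q (ht.imp (fun heq : t = t1 => heq ▸ hq) fun heq : t = t2 => heq ▸ hq)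
  induction l, hml using Nat.le_induction with
  | base => exact next_mem hl hp
  | succ l _ ih =>
    obtain ⟨q, hqp, hq⟩ := hp.exists_suffix (ih (Nat.le_of_succ_le hl))
    exact hqp.subset (next_mem hl hq)

theorem not_reachesAvoiding (h : G.IsCutSeq s t1 t2 k c) (hml : m < l) (hl : l ≤ k) :
    ¬ G.ReachesAvoiding (c m) {t1, t2} (c l) := fun ⟨_, ht, _, hp, hlp⟩ =>
  hlp (h.mem_of_pathFrom_terminal hml hl ht hp)

theorem ne_terminal (h : G.IsCutSeq s t1 t2 k c) (hinj : Set.InjOn c (Set.Iic k)) (hm : m < k)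
    {t : V} (ht : t ∈ ({t1, t2} : Set V)) : c m ≠ t := by
  rintro rfl
  have hsingle := pathFrom_singleton (h.mem_verts (Nat.zero_lt_of_lt hm) hm.le)
  have heq : c (m + 1) = c m :=
    List.mem_singleton.1 (h.mem_of_pathFrom_terminal m.lt_succ_self hm ht hsingle)
  exact m.succ_ne_self (hinj hm hm.le heq)

theorem reachesAvoiding_of_lt (h : G.IsCutSeq s t1 t2 k c) (hinj : Set.InjOn c (Set.Iic k))
    (hml : m < l) (hl : l ≤ k) : G.ReachesAvoiding (c l) {t1, t2} (c m) := by
  have hne {j : ℕ} (hmj : m < j) (hj : j ≤ k) : c m ≠ c j :=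
    hinj.ne (hmj.le.trans hj) hj hmj.ne
  induction hl using Nat.decreasingInduction with
  | self =>
    obtain ⟨p, q, hp, hq, hpq⟩ := h.exists_intDisjoint_last (Nat.zero_lt_of_lt hml)
    rcases hpq.notMem_or_notMem hp (hne hml le_rfl) (h.ne_terminal hinj hml (.inl rfl)) with hm | hm
    · exact ⟨t1, .inl rfl, p, hp, hm⟩
    · exact ⟨t2, .inr rfl, q, hq, hm⟩
  | of_succ l hl ih =>
    have hml' : m < l + 1 := hml.trans l.lt_succ_self
    obtain ⟨p, q, hp, hq, hpq⟩ := h.exists_intDisjoint hl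
    rcases hpq.notMem_or_notMem hp (hne hml hl.le) (hne hml' hl) with hm | hm
    · exact .of_pathFrom hp hm (ih hml')
    · exact .of_pathFrom hq hm (ih hml')

theorem reachesAvoiding_of_mem_region (h : G.IsCutSeq s t1 t2 k c)
    (hinj : Set.InjOn c (Set.Iic k)) (hj : j ≤ k) (hv : v ∈ G.region t1 t2 k c j)
    (hvj : v ≠ c j) : G.ReachesAvoiding v {t1, t2} (c j) := by
  rcases hj.lt_or_eq with hj | rfl
  · rw [region, if_pos hj] at hv
    obtain ⟨_, rfl, p, hp, hjp⟩ := reachesAvoiding_of_mem_pathSpan hv hvj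
    exact .of_pathFrom hp hjp (h.reachesAvoiding_of_lt hinj j.lt_succ_self hj)
  · rw [region, if_neg (lt_irrefl j)] at hv
    exact reachesAvoiding_of_mem_pathSpan hv hvj

theorem mem_of_pathFrom (h : G.IsCutSeq s t1 t2 k c) (hinj : Set.InjOn c (Set.Iic k))
    (hml : m < l) (hlj : l ≤ j) (hj : j ≤ k) (hp : G.PathFrom p (c m) (c j)) : c l ∈ p := by
  rcases hlj.lt_or_eq with hlj | rfl
  · by_contra hlp
    exact h.not_reachesAvoiding hml (hlj.le.trans hj)
      (.of_pathFrom hp hlp (h.reachesAvoiding_of_lt hinj hlj hj))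
  · exact hp.last_mem

theorem eq_succ_of_mem_region_of_mem_region (h : G.IsCutSeq s t1 t2 k c)
    (hinj : Set.InjOn c (Set.Iic k)) (hij : i < j) (hj : j ≤ k)
    (hvi : v ∈ G.region t1 t2 k c i) (hvj : v ∈ G.region t1 t2 k c j) :
    j = i + 1 ∧ v = c (i + 1) := by
  have hi : i < k := hij.trans_le hj
  obtain ⟨p, hp, hvp⟩ := region_of_lt hi ▸ hvi
  obtain ⟨q, hqp, hq⟩ := hp.exists_prefix hvp
  have hjq : c j ∈ q := by
    by_contra hjq
    have hne : v ≠ c j := fun heq => hjq (heq ▸ hq.last_mem)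
    exact h.not_reachesAvoiding hij hj
      (.of_pathFrom hq hjq (h.reachesAvoiding_of_mem_region hinj hj hvj hne))
  obtain ⟨r, hrq, hr⟩ := hq.exists_prefix hjq
  have hir : c (i + 1) ∈ r := h.mem_of_pathFrom hinj i.lt_succ_self hij hj hr
  exact ⟨hinj hj hi (hp.eq_of_last_mem_prefix (hrq.trans hqp) hr hir),
    hp.eq_of_last_mem_prefix hqp hq (hrq.subset hir)⟩

end IsCutSeq

end CutSequences

end Dgraph

/-- **the regions `R i` are almost disjoint.**
Let `c 0, …, c k` be a sequence of cut vertices between `s` and `t1, t2` with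
pairwise distinct entries.  For `i < k` let `R i` be the set of vertices lying
on some directed path from `c i` to `c (i+1)`, and let `R k` be the set of
vertices lying on some directed path from `c k` to `t1` or to `t2`.  Then for
`i < j ≤ k`: if `j = i + 1` then `R i ∩ R j = {c j}`, and if `j > i + 1` then
`R i ∩ R j = ∅`. -/
theorem stmt3 {V : Type*} (G : Dgraph V) (s t1 t2 : V)
    (hs1 : s ≠ t1) (hs2 : s ≠ t2)
    (k : ℕ) (c : ℕ → V)
    (hcut : G.IsCutSeq s t1 t2 k c)
    (hinj : ∀ i j, i ≤ k → j ≤ k → c i = c j → i = j)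
    (R : ℕ → Set V)
    (hR : ∀ i < k, R i = {v | ∃ p : List V, G.PathFrom p (c i) (c (i + 1)) ∧ v ∈ p})
    (hRk : R k = {v | ∃ p : List V,
        (G.PathFrom p (c k) t1 ∨ G.PathFrom p (c k) t2) ∧ v ∈ p}) :
    ∀ i j, i < j → j ≤ k →
      (j = i + 1 → R i ∩ R j = {c j}) ∧ (i + 1 < j → R i ∩ R j = ∅) := by
  have hinj' : Set.InjOn c (Set.Iic k) := fun i hi j hj => hinj i j hi hj
  have hregion : ∀ i ≤ k, R i = G.region t1 t2 k c i := by
    intro i hi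
    rcases hi.lt_or_eq with hi | rfl
    · rw [hR i hi, Dgraph.region_of_lt hi]
    · rw [hRk, Dgraph.region_self]
  intro i j hij hj
  rw [hregion i (hij.le.trans hj), hregion j hj]
  refine ⟨?_, fun hij' => ?_⟩
  · rintro rfl
    refine Set.Subset.antisymm (fun v ⟨hvi, hvj⟩ => ?_) (Set.singleton_subset_iff.2 ⟨?_, ?_⟩)
    · exact (hcut.eq_succ_of_mem_region_of_mem_region hinj' hij hj hvi hvj).2
    · exact hcut.succ_mem_region hj
    · exact hcut.mem_region_self (Nat.zero_lt_of_lt hj) hj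
  · exact Set.eq_empty_of_forall_notMem fun v ⟨hvi, hvj⟩ =>
      hij'.ne' (hcut.eq_succ_of_mem_region_of_mem_region hinj' hij hj hvi hvj).1
end

section
/- Let G be a digraph, let x1, x2, y1, y2, y3 be pairwise distinct vertices of G, and let c_0, c_1, …, c_d be a sequence of cut vertices between x1 and y1, y2 whose entries are pairwise distinct. Then the following are equivalent: (a) there exist directed paths P1 from x1 to y1, P2 from x1 to y2, and P3 from x2 to y3 such that no vertex of G lies on all three of these paths; (b) there is a directed path from x2 to y3 in the digraph obtained from G by deleting all the vertices c_0, c_1, …, c_d. -/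
/-!
The cut vertices are exactly the unavoidable common vertices of a path from `x1` to `y1` and a path
from `x1` to `y2`. Every such path runs through all of them, one after the other. Conversely,
concatenating the internally disjoint pairs supplied by the cut sequence gives two paths that meet
in cut vertices only: if a path from `c j` to `c (j + 1)` met a later segment in another vertex,
then switching from one to the other there would bypass `c (j + 1)`.
-/

namespace Dgraph

variable {V : Type*} {G : Dgraph V} {a b s t t₁ t₂ v : V} {p q : List V}

theorem IsPath.of_isInfix (hp : G.IsPath p) (hqp : q <:+: p) (hq : q ≠ []) : G.IsPath q := by
  obtain ⟨-, hnodup, hchain, hverts⟩ := hp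
  refine ⟨hq, hnodup.sublist hqp.sublist, ?_, fun v hv => hverts v (hqp.subset hv)⟩
  obtain ⟨l₁, l₂, rfl⟩ := hqp
  exact hchain.left_of_append.right_of_append

theorem isPath_cons_cons_iff :
    G.IsPath (a :: b :: p) ↔ a ∉ b :: p ∧ G.Edge a b ∧ G.IsPath (b :: p) := by
  constructor
  · intro h
    exact ⟨(List.nodup_cons.1 h.2.1).1, (List.isChain_cons_cons.1 h.2.2.1).1,
      h.of_isInfix (List.suffix_cons a _).isInfix (List.cons_ne_nil b p)⟩
  · rintro ⟨ha, hab, -, hnodup, hchain, hverts⟩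
    exact ⟨List.cons_ne_nil _ _, List.nodup_cons.2 ⟨ha, hnodup⟩,
      List.isChain_cons_cons.2 ⟨hab, hchain⟩,
      List.forall_mem_cons.2 ⟨(G.mem_of_edge hab).1, hverts⟩⟩

theorem isPath_delete_iff {D : Set V} :
    (G.delete D).IsPath p ↔ G.IsPath p ∧ ∀ v ∈ p, v ∉ D := by
  constructor
  · rintro ⟨hne, hnodup, hchain, hverts⟩
    exact ⟨⟨hne, hnodup, hchain.imp fun _ _ h => h.1, fun v hv => (hverts v hv).1⟩,
      fun v hv => (hverts v hv).2⟩
  · rintro ⟨⟨hne, hnodup, hchain, hverts⟩, hD⟩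
    exact ⟨hne, hnodup, hchain.imp_of_mem_imp fun x y hx hy h => ⟨h, hD x hx, hD y hy⟩,
      fun v hv => ⟨hverts v hv, hD v hv⟩⟩

theorem pathFrom_delete_iff {D : Set V} :
    (G.delete D).PathFrom p a b ↔ G.PathFrom p a b ∧ ∀ v ∈ p, v ∉ D := by
  rw [PathFrom, PathFrom, isPath_delete_iff, and_right_comm]

namespace PathFrom

theorem head_mem_s6 (hp : G.PathFrom p a b) : a ∈ p :=
  List.mem_of_head? hp.2.1

theorem last_mem_s6 (hp : G.PathFrom p a b) : b ∈ p :=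
  List.mem_of_getLast? hp.2.2

theorem exists_split (hp : G.PathFrom p a b) (hv : v ∈ p) :
    ∃ p₁ p₂, G.PathFrom p₁ a v ∧ G.PathFrom p₂ v b ∧ p₁ ⊆ p ∧ p₂ ⊆ p ∧
      ∀ w ∈ p₁, w ∈ p₂ → w = v := by
  obtain ⟨l₁, l₂, rfl⟩ := List.append_of_mem hv
  obtain ⟨hpath, hhead, hlast⟩ := hp
  have hinitial : l₁ ++ [v] <+: l₁ ++ v :: l₂ := ⟨l₂, by simp⟩
  have hfinal : v :: l₂ <:+ l₁ ++ v :: l₂ := List.suffix_append _ _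
  refine ⟨l₁ ++ [v], v :: l₂,
    ⟨hpath.of_isInfix hinitial.isInfix (by simp), ?_, by simp⟩,
    ⟨hpath.of_isInfix hfinal.isInfix (by simp), by simp, ?_⟩,
    hinitial.subset, hfinal.subset, ?_⟩
  · simpa [List.head?_append] using hhead
  · simpa [List.getLast?_append] using hlast
  · intro w hw₁ hw₂
    have hdisjoint : List.Disjoint l₁ (v :: l₂) := List.disjoint_of_nodup_append hpath.2.1
    exact (List.mem_append.1 hw₁).elim (fun h => (hdisjoint h hw₂).elim) List.mem_singleton.1

theorem exists_of_edge (hab : G.Edge a b) (hq : G.PathFrom q b t) :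
    ∃ r, G.PathFrom r a t ∧ r ⊆ a :: q := by
  by_cases ha : a ∈ q
  · obtain ⟨-, r, -, hr, -, hrq, -⟩ := hq.exists_split ha
    exact ⟨r, hr, List.subset_cons_of_subset a hrq⟩
  · obtain ⟨hpath, hhead, hlast⟩ := hq
    obtain ⟨q, rfl⟩ := List.head?_eq_some_iff.1 hhead
    exact ⟨a :: b :: q, ⟨isPath_cons_cons_iff.2 ⟨ha, hab, hpath⟩, rfl, hlast⟩, List.Subset.refl _⟩

theorem exists_trans_s6 (hp : G.PathFrom p a b) (hq : G.PathFrom q b t) :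
    ∃ r, G.PathFrom r a t ∧ r ⊆ p ++ q := by
  obtain ⟨hpath, hhead, hlast⟩ := hp
  obtain ⟨p, rfl⟩ := List.head?_eq_some_iff.1 hhead
  clear hhead
  induction p generalizing a with
  | nil =>
    obtain rfl : a = b := Option.some.inj hlast
    exact ⟨q, hq, List.subset_append_right _ q⟩
  | cons x p ih =>
    obtain ⟨-, hax, hpath⟩ := isPath_cons_cons_iff.1 hpath
    obtain ⟨r, hr, hrpq⟩ := ih hpath hlast
    obtain ⟨r', hr', hr'r⟩ := exists_of_edge hax hr
    exact ⟨r', hr', List.Subset.trans hr'r (List.cons_subset_cons a hrpq)⟩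

theorem eq_cut_of_mem_of_mem (hp : G.PathFrom p a b) (hq : G.PathFrom q b t)
    (hcut : ∀ r, G.PathFrom r a t → b ∈ r) (hvp : v ∈ p) (hvq : v ∈ q) : v = b := by
  obtain ⟨p₁, p₂, hp₁, hp₂, -, -, hp₁₂⟩ := hp.exists_split hvp
  obtain ⟨q₁, q₂, hq₁, hq₂, -, -, hq₁₂⟩ := hq.exists_split hvq
  obtain ⟨r, hr, hrpq⟩ := hp₁.exists_trans_s6 hq₂
  rcases List.mem_append.1 (hrpq (hcut r hr)) with hb | hb
  · exact (hp₁₂ b hb hp₂.last_mem_s6).symm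
  · exact (hq₁₂ b hq₁.head_mem_s6 hb).symm

theorem mem_internals_s6 (hp : G.PathFrom p a b) (hv : v ∈ p) (hva : v ≠ a) (hvb : v ≠ b) :
    v ∈ internals p := by
  obtain ⟨-, hhead, hlast⟩ := hp
  obtain ⟨l, rfl⟩ := List.head?_eq_some_iff.1 hhead
  have hvl : v ∈ l := List.mem_of_ne_of_mem hva hv
  refine List.mem_dropLast_of_mem_of_ne_getLast? hvl fun hlast' : some v = l.getLast? => hvb ?_
  rw [List.getLast?_cons, ← hlast'] at hlast
  exact Option.some.inj hlast

end PathFrom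

theorem IntDisjoint.eq_or_eq_and_eq (hpq : IntDisjoint p q) (hp : G.PathFrom p a t₁)
    (hq : G.PathFrom q a t₂) (hvp : v ∈ p) (hvq : v ∈ q) : v = a ∨ v = t₁ ∧ v = t₂ := by
  have hnot_internal := mt (hpq v) (not_not_intro ⟨hvp, hvq⟩)
  by_contra! ⟨hva, hvt⟩
  by_cases hvt₁ : v = t₁
  · exact hnot_internal (.inr (hq.mem_internals_s6 hvq hva (hvt hvt₁)))
  · exact hnot_internal (.inl (hp.mem_internals_s6 hvp hva hvt₁))

namespace IsCutSeq

variable {k : ℕ} {c : ℕ → V}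

theorem mem_of_pathFrom_s6 (hc : G.IsCutSeq s t₁ t₂ k c)
    (hp : G.PathFrom p s t₁ ∨ G.PathFrom p s t₂) {i : ℕ} (hi : i ≤ k) : c i ∈ p := by
  obtain ⟨hc₀, hstep, -⟩ := hc
  induction i with
  | zero => exact hc₀ ▸ hp.elim PathFrom.head_mem_s6 PathFrom.head_mem_s6
  | succ i ih =>
    have hmem : c i ∈ p := ih (Nat.le_of_succ_le hi)
    have hnext := (hstep i hi).2
    rcases hp with hp | hp
    · obtain ⟨-, p₂, -, hp₂, -, hp₂p, -⟩ := hp.exists_split hmem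
      exact hp₂p (hnext p₂ (.inl hp₂))
    · obtain ⟨-, p₂, -, hp₂, -, hp₂p, -⟩ := hp.exists_split hmem
      exact hp₂p (hnext p₂ (.inr hp₂))

theorem tail (hc : G.IsCutSeq s t₁ t₂ (k + 1) c) :
    G.IsCutSeq (c 1) t₁ t₂ k (fun i => c (i + 1)) :=
  ⟨rfl, fun j hj => hc.2.1 (j + 1) (Nat.succ_lt_succ hj), hc.2.2⟩

theorem exists_pathFrom_inter_subset (hc : G.IsCutSeq s t₁ t₂ k c) (ht : t₁ ≠ t₂) :
    ∃ p q, G.PathFrom p s t₁ ∧ G.PathFrom q s t₂ ∧ ∀ v ∈ p, v ∈ q → ∃ i ≤ k, v = c i := by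
  induction k generalizing s c with
  | zero =>
    obtain ⟨rfl, -, ⟨-, heq⟩ | ⟨p, q, hp, hq, hpq⟩⟩ := hc
    · exact absurd heq ht
    · refine ⟨p, q, hp, hq, fun v hvp hvq => ⟨0, le_rfl, ?_⟩⟩
      exact (hpq.eq_or_eq_and_eq hp hq hvp hvq).resolve_right
        fun ⟨hv₁, hv₂⟩ => ht (hv₁.symm.trans hv₂)
  | succ k ih =>
    obtain ⟨p', q', hp', hq', hinter⟩ := ih hc.tail
    obtain ⟨rfl, hstep, -⟩ := hc
    obtain ⟨⟨p, q, -, hp, hq, hpq⟩, hcut⟩ := hstep 0 k.succ_pos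
    obtain ⟨P, hP, hPsub⟩ := hp.exists_trans_s6 hp'
    obtain ⟨Q, hQ, hQsub⟩ := hq.exists_trans_s6 hq'
    have hone : 1 ≤ k + 1 := Nat.le_add_left 1 k
    refine ⟨P, Q, hP, hQ, fun v hvP hvQ => ?_⟩
    rcases List.mem_append.1 (hPsub hvP) with hvp | hvp' <;>
      rcases List.mem_append.1 (hQsub hvQ) with hvq | hvq'
    · rcases hpq.eq_or_eq_and_eq hp hq hvp hvq with hv | ⟨hv, -⟩
      · exact ⟨0, Nat.zero_le _, hv⟩
      · exact ⟨1, hone, hv⟩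
    · exact ⟨1, hone, hp.eq_cut_of_mem_of_mem hq' (fun r hr => hcut r (.inr hr)) hvp hvq'⟩
    · exact ⟨1, hone, hq.eq_cut_of_mem_of_mem hp' (fun r hr => hcut r (.inl hr)) hvq hvp'⟩
    · obtain ⟨i, hi, hv⟩ := hinter v hvp' hvq'
      exact ⟨i + 1, Nat.succ_le_succ hi, hv⟩

end IsCutSeq

end Dgraph

/-- Let `x1, x2, y1, y2, y3` be pairwise distinct vertices and
let `c 0, …, c d` be a sequence of cut vertices between `x1` and `y1, y2` with
pairwise distinct entries.  Then a half-integral routing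
`(x1 → y1, x1 → y2, x2 → y3)` (no vertex on all three paths) exists iff there is
a directed path from `x2` to `y3` in `G − {c 0, …, c d}`. -/
theorem stmt6 {V : Type*} (G : Dgraph V) (x1 x2 y1 y2 y3 : V)
    (hdist : List.Pairwise (· ≠ ·) [x1, x2, y1, y2, y3])
    (d : ℕ) (c : ℕ → V)
    (hcut : G.IsCutSeq x1 y1 y2 d c)
    (hinj : ∀ i j, i ≤ d → j ≤ d → c i = c j → i = j) :
    (∃ P1 P2 P3 : List V, G.PathFrom P1 x1 y1 ∧ G.PathFrom P2 x1 y2 ∧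
        G.PathFrom P3 x2 y3 ∧ ∀ v : V, ¬(v ∈ P1 ∧ v ∈ P2 ∧ v ∈ P3)) ↔
    (∃ P : List V, (G.delete {v | ∃ i ≤ d, v = c i}).PathFrom P x2 y3) := by
  simp only [Dgraph.pathFrom_delete_iff]
  constructor
  · rintro ⟨P1, P2, P3, hP1, hP2, hP3, hdisjoint⟩
    refine ⟨P3, hP3, ?_⟩
    rintro v hv ⟨i, hi, rfl⟩
    exact hdisjoint (c i)
      ⟨hcut.mem_of_pathFrom_s6 (.inl hP1) hi, hcut.mem_of_pathFrom_s6 (.inr hP2) hi, hv⟩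
  · rintro ⟨P3, hP3, havoid⟩
    have hy : y1 ≠ y2 := by
      simp only [List.pairwise_cons, List.mem_cons] at hdist
      exact hdist.2.2.1 y2 (.inl rfl)
    obtain ⟨P1, P2, hP1, hP2, hinter⟩ := hcut.exists_pathFrom_inter_subset hy
    exact ⟨P1, P2, P3, hP1, hP2, hP3, fun v ⟨hv1, hv2, hv3⟩ => havoid v hv3 (hinter v hv1 hv2)⟩
end

section
/- Let G be a digraph and let x1, x2, y1, y2, y3, y4 be vertices of G with x1 ∉ {y1, y2}. Let P1, P2, P3, P4 be directed paths in G such that P1 goes from x1 to y1, P2 goes from x1 to y2, P3 goes from x2 to y3, P4 goes from x2 to y4, and every vertex of G lies on at most two of the four paths. Let D ⊆ V(P3) ∩ V(P4), and let c_0, c_1, …, c_m be a sequence of cut vertices between x1 and y1, y2 in the digraph G − D obtained from G by deleting all vertices of D. Then {c_0, c_1, …, c_m} ⊆ V(P1) ∩ V(P2). -/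
/-!
A vertex of `D` lies on `P3` and `P4`, so by the congestion bound it lies on neither `P1` nor `P2`;
hence both paths survive in `G - D`. If a cut vertex `c j` lies on a surviving path, the rest of
that path from `c j` on is a path to the same target, so it passes through `c (j + 1)`.
-/

namespace Dgraph

variable {V : Type*} {G : Dgraph V} {p q P1 P2 : List V} {a b s t1 t2 v : V}
  {D : Set V} {m : ℕ} {c : ℕ → V}

theorem IsPath.suffix (hp : G.IsPath p) (hqp : q <:+ p) (hq : q ≠ []) : G.IsPath q :=
  ⟨hq, hp.2.1.sublist hqp.sublist, List.IsChain.suffix hp.2.2.1 hqp,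
    fun v hv => hp.2.2.2 v (hqp.mem hv)⟩

theorem IsPath.delete (hp : G.IsPath p) (hpD : ∀ v ∈ p, v ∉ D) : (G.delete D).IsPath p :=
  ⟨hp.1, hp.2.1,
    List.IsChain.imp_of_mem_imp (fun _ _ hx hy hxy => ⟨hxy, hpD _ hx, hpD _ hy⟩) hp.2.2.1,
    fun v hv => ⟨hp.2.2.2 v hv, hpD v hv⟩⟩

theorem PathFrom.delete (hp : G.PathFrom p a b) (hpD : ∀ v ∈ p, v ∉ D) :
    (G.delete D).PathFrom p a b :=
  ⟨hp.1.delete hpD, hp.2⟩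

theorem PathFrom.source_mem (hp : G.PathFrom p a b) : a ∈ p :=
  List.mem_of_mem_head? hp.2.1

theorem PathFrom.exists_suffix_of_mem (hp : G.PathFrom p a b) (hv : v ∈ p) :
    ∃ q, q <:+ p ∧ G.PathFrom q v b := by
  obtain ⟨hpath, -, hlast⟩ := hp
  obtain ⟨l, r, rfl⟩ := List.append_of_mem hv
  have hsuffix : v :: r <:+ l ++ v :: r := List.suffix_append l (v :: r)
  have hne : v :: r ≠ [] := List.cons_ne_nil v r
  rw [List.getLast?_append_of_ne_nil l hne] at hlast
  exact ⟨v :: r, hsuffix, hpath.suffix hsuffix hne, List.head?_cons, hlast⟩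

theorem PathFrom.mem_of_successive_separators (hp : G.PathFrom p a b) (hzero : c 0 ∈ p)
    (hsep : ∀ j < m, ∀ q, G.PathFrom q (c j) b → c (j + 1) ∈ q) :
    ∀ i ≤ m, c i ∈ p := by
  intro i hi
  induction i with
  | zero => exact hzero
  | succ j ih =>
    obtain ⟨q, hqp, hq⟩ := hp.exists_suffix_of_mem (ih (Nat.le_of_succ_le hi))
    exact hqp.mem (hsep j hi q hq)

theorem IsCutSeq.mem_and_mem (hcut : G.IsCutSeq s t1 t2 m c)
    (h1 : G.PathFrom P1 s t1) (h2 : G.PathFrom P2 s t2) :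
    ∀ i ≤ m, c i ∈ P1 ∧ c i ∈ P2 := by
  obtain ⟨rfl, hstep, -⟩ := hcut
  intro i hi
  exact ⟨h1.mem_of_successive_separators h1.source_mem
      (fun j hj q hq => (hstep j hj).2 q (.inl hq)) i hi,
    h2.mem_of_successive_separators h2.source_mem
      (fun j hj q hq => (hstep j hj).2 q (.inr hq)) i hi⟩

end Dgraph

theorem not_and_not_of_sum_ite_le_two {A B C E : Prop}
    [Decidable A] [Decidable B] [Decidable C] [Decidable E]
    (hsum : (if A then 1 else 0) + (if B then 1 else 0) +
      (if C then 1 else 0) + (if E then 1 else 0) ≤ 2)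
    (hCE : C ∧ E) : ¬A ∧ ¬B := by
  constructor <;> intro h <;> simp [h, hCE] at hsum

theorem stmt7_general {V : Type*} {G : Dgraph V} {s t1 t2 : V} {P1 P2 : List V}
    (h1 : G.PathFrom P1 s t1) (h2 : G.PathFrom P2 s t2)
    {D : Set V} (hD : ∀ v ∈ D, v ∉ P1 ∧ v ∉ P2)
    {m : ℕ} {c : ℕ → V} (hcut : (G.delete D).IsCutSeq s t1 t2 m c) :
    ∀ i ≤ m, c i ∈ P1 ∧ c i ∈ P2 :=
  hcut.mem_and_mem (h1.delete fun v hv hvD => (hD v hvD).1 hv)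
    (h2.delete fun v hv hvD => (hD v hvD).2 hv)

/-- Let `P1, P2, P3, P4` be paths from `x1` to `y1`, from `x1`
to `y2`, from `x2` to `y3`, and from `x2` to `y4` respectively, such that every
vertex lies on at most two of the four paths.  Let `D ⊆ V(P3) ∩ V(P4)` and let
`c 0, …, c m` be a sequence of cut vertices between `x1` and `y1, y2` in
`G − D`.  Then every `c i` lies on both `P1` and `P2`. -/
theorem stmt7 {V : Type*} [DecidableEq V] (G : Dgraph V) (x1 x2 y1 y2 y3 y4 : V)
    (hx1 : x1 ≠ y1) (hx2 : x1 ≠ y2)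
    (P1 P2 P3 P4 : List V)
    (h1 : G.PathFrom P1 x1 y1) (h2 : G.PathFrom P2 x1 y2)
    (h3 : G.PathFrom P3 x2 y3) (h4 : G.PathFrom P4 x2 y4)
    (hcong : ∀ z : V,
      (if z ∈ P1 then 1 else 0) + (if z ∈ P2 then 1 else 0) +
      (if z ∈ P3 then 1 else 0) + (if z ∈ P4 then 1 else 0) ≤ 2)
    (D : Set V) (hD : ∀ v ∈ D, v ∈ P3 ∧ v ∈ P4)
    (m : ℕ) (c : ℕ → V)
    (hcut : (G.delete D).IsCutSeq x1 y1 y2 m c) :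
    ∀ i ≤ m, c i ∈ P1 ∧ c i ∈ P2 :=
  stmt7_general h1 h2 (fun v hv => not_and_not_of_sum_ite_le_two (hcong v) (hD v hv)) hcut
end

section
/- Let G be a digraph and T ⊆ V(G). Suppose G has no directed separation (C,D) of order at most 1 with T ⊆ C and D \ C ≠ ∅. For i = 1, 2 let (A_i, B_i) be a directed separation of G of order at most 2 such that G has no edge with tail in B_i \ A_i and head in A_i \ B_i, with T ⊆ A_1 ∩ A_2. If (B_1 \ A_1) ∩ (B_2 \ A_2) ≠ ∅, then (A_1 ∩ A_2, B_1 ∪ B_2) is a directed separation of G of order at most 2, G has no edge with tail in (B_1 ∪ B_2) \ (A_1 ∩ A_2) and head in (A_1 ∩ A_2) \ (B_1 ∪ B_2), and T ⊆ A_1 ∩ A_2. -/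
/-!
Separation orders are submodular: the orders of `(A₁ ∩ A₂, B₁ ∪ B₂)` and of the opposite corner
`(A₁ ∪ A₂, B₁ ∩ B₂)` add up to at most the orders of `(A₁, B₁)` and `(A₂, B₂)`. The opposite corner
still has `T` on its first side, and its second side is proper because `B₁ \ A₁` meets `B₂ \ A₂`;
so it has order at least `2`, which leaves at most `4 - 2 = 2` for `(A₁ ∩ A₂, B₁ ∪ B₂)`.
-/

theorem encard_inter_union_add_encard_union_inter_le {V : Type*} (A₁ B₁ A₂ B₂ : Set V) :
    ((A₁ ∩ A₂) ∩ (B₁ ∪ B₂)).encard + ((A₁ ∪ A₂) ∩ (B₁ ∩ B₂)).encard ≤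
      (A₁ ∩ B₁).encard + (A₂ ∩ B₂).encard := by
  set X := (A₁ ∩ A₂) ∩ (B₁ ∪ B₂)
  set Y := (A₁ ∪ A₂) ∩ (B₁ ∩ B₂)
  have union_subset : X ∪ Y ⊆ (A₁ ∩ B₁) ∪ (A₂ ∩ B₂) := by grind
  have inter_subset : X ∩ Y ⊆ (A₁ ∩ B₁) ∩ (A₂ ∩ B₂) := by grind
  calc X.encard + Y.encard
      = (X ∪ Y).encard + (X ∩ Y).encard := (Set.encard_union_add_encard_inter X Y).symm
    _ ≤ ((A₁ ∩ B₁) ∪ (A₂ ∩ B₂)).encard + ((A₁ ∩ B₁) ∩ (A₂ ∩ B₂)).encard :=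
        add_le_add (Set.encard_le_encard union_subset) (Set.encard_le_encard inter_subset)
    _ = (A₁ ∩ B₁).encard + (A₂ ∩ B₂).encard := Set.encard_union_add_encard_inter _ _

/-- A directed separation `(A, B)` of the possibly infinite digraph with vertex set `S` and edge
relation `E`, oriented so that no edge leaves `B \ A` for `A \ B`. Its order is
`(A ∩ B).encard`. -/
structure IsOneWaySeparation {V : Type*} (E : V → V → Prop) (S A B : Set V) : Prop where
  union_eq : A ∪ B = S
  notMem_of_edge : ∀ x y, E x y → x ∈ B \ A → y ∉ A \ B

namespace IsOneWaySeparation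

variable {V : Type*} {E : V → V → Prop} {S A B A₁ B₁ A₂ B₂ : Set V}

theorem inter_union (h₁ : IsOneWaySeparation E S A₁ B₁) (h₂ : IsOneWaySeparation E S A₂ B₂) :
    IsOneWaySeparation E S (A₁ ∩ A₂) (B₁ ∪ B₂) where
  union_eq := by grind [h₁.union_eq, h₂.union_eq]
  notMem_of_edge x y hxy hx hy := by
    have same_verts : x ∈ A₁ ∪ B₁ ↔ x ∈ A₂ ∪ B₂ := by rw [h₁.union_eq, h₂.union_eq]
    have tail_mem : x ∈ B₁ \ A₁ ∨ x ∈ B₂ \ A₂ := by grind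
    have head_mem : y ∈ A₁ \ B₁ ∧ y ∈ A₂ \ B₂ := by grind
    exact tail_mem.elim (h₁.notMem_of_edge x y hxy · head_mem.1)
      (h₂.notMem_of_edge x y hxy · head_mem.2)

theorem union_inter (h₁ : IsOneWaySeparation E S A₁ B₁) (h₂ : IsOneWaySeparation E S A₂ B₂) :
    IsOneWaySeparation E S (A₁ ∪ A₂) (B₁ ∩ B₂) where
  union_eq := by grind [h₁.union_eq, h₂.union_eq]
  notMem_of_edge x y hxy hx hy := by
    have same_verts : y ∈ A₁ ∪ B₁ ↔ y ∈ A₂ ∪ B₂ := by rw [h₁.union_eq, h₂.union_eq]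
    have tail_mem : x ∈ B₁ \ A₁ ∧ x ∈ B₂ \ A₂ := by grind
    have head_mem : y ∈ A₁ \ B₁ ∨ y ∈ A₂ \ B₂ := by grind
    exact head_mem.elim (h₁.notMem_of_edge x y hxy tail_mem.1)
      (h₂.notMem_of_edge x y hxy tail_mem.2)

theorem encard_le_iff_ncard_le (h : IsOneWaySeparation E S A B) (hS : S.Finite) (k : ℕ) :
    (A ∩ B).encard ≤ k ↔ (A ∩ B).ncard ≤ k := by
  have inter_finite : (A ∩ B).Finite :=
    hS.subset (h.union_eq ▸ Set.inter_subset_left.trans Set.subset_union_left)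
  rw [← inter_finite.cast_ncard_eq, Nat.cast_le]

theorem succ_le_encard_of_not_exists (h : IsOneWaySeparation E S A B) (hS : S.Finite) {T : Set V}
    {k : ℕ}
    (not_exists : ¬ ∃ C D : Set V, C ∪ D = S ∧
      ((∀ x y, E x y → x ∈ C \ D → y ∉ D \ C) ∨ (∀ x y, E x y → x ∈ D \ C → y ∉ C \ D)) ∧
      (C ∩ D).ncard ≤ k ∧ T ⊆ C ∧ (D \ C).Nonempty)
    (hT : T ⊆ A) (hproper : (B \ A).Nonempty) :
    ((k + 1 : ℕ) : ℕ∞) ≤ (A ∩ B).encard := by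
  by_contra! order_lt
  have order_le : (A ∩ B).encard ≤ k := Order.le_of_lt_add_one order_lt
  exact not_exists ⟨A, B, h.union_eq, .inr h.notMem_of_edge,
    (h.encard_le_iff_ncard_le hS k).mp order_le, hT, hproper⟩

end IsOneWaySeparation

theorem stmt9_general {V : Type*} {E : V → V → Prop} {S T A₁ B₁ A₂ B₂ : Set V} {m : ℕ} {n : ℕ∞}
    (le_order : ∀ C D, IsOneWaySeparation E S C D → T ⊆ C → (D \ C).Nonempty →
      m ≤ (C ∩ D).encard)
    (h₁ : IsOneWaySeparation E S A₁ B₁) (h₂ : IsOneWaySeparation E S A₂ B₂)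
    (order_le₁ : (A₁ ∩ B₁).encard ≤ m) (order_le₂ : (A₂ ∩ B₂).encard ≤ n)
    (hT : T ⊆ A₁ ∪ A₂) (hmeet : ((B₁ \ A₁) ∩ (B₂ \ A₂)).Nonempty) :
    IsOneWaySeparation E S (A₁ ∩ A₂) (B₁ ∪ B₂) ∧ ((A₁ ∩ A₂) ∩ (B₁ ∪ B₂)).encard ≤ n := by
  refine ⟨h₁.inter_union h₂, ?_⟩
  have opposite_proper : ((B₁ ∩ B₂) \ (A₁ ∪ A₂)).Nonempty := hmeet.mono (by grind)
  have le_opposite : m ≤ ((A₁ ∪ A₂) ∩ (B₁ ∩ B₂)).encard :=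
    le_order _ _ (h₁.union_inter h₂) hT opposite_proper
  refine (ENat.add_le_add_iff_right (ENat.natCast_ne_top m)).mp ?_
  calc ((A₁ ∩ A₂) ∩ (B₁ ∪ B₂)).encard + m
      ≤ ((A₁ ∩ A₂) ∩ (B₁ ∪ B₂)).encard + ((A₁ ∪ A₂) ∩ (B₁ ∩ B₂)).encard := by gcongr
    _ ≤ (A₁ ∩ B₁).encard + (A₂ ∩ B₂).encard :=
        encard_inter_union_add_encard_union_inter_le A₁ B₁ A₂ B₂
    _ ≤ m + n := add_le_add order_le₁ order_le₂
    _ = n + m := add_comm _ _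

/-- Suppose `G` has no directed separation `(C, D)` of order at
most `1` with `T ⊆ C` and `D \ C ≠ ∅`.  For `i = 1, 2` let `(Aᵢ, Bᵢ)` be a
directed separation of order at most `2` with no cross edge from `Bᵢ \ Aᵢ` to
`Aᵢ \ Bᵢ` and `T ⊆ A₁ ∩ A₂`.  If `(B₁ \ A₁) ∩ (B₂ \ A₂) ≠ ∅`, then
`(A₁ ∩ A₂, B₁ ∪ B₂)` is a directed separation of order at most `2` with no cross
edge from `(B₁ ∪ B₂) \ (A₁ ∩ A₂)` to `(A₁ ∩ A₂) \ (B₁ ∪ B₂)`, and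
`T ⊆ A₁ ∩ A₂`. -/
theorem stmt9 {V : Type*} (G : Dgraph V) (T : Set V)
    (hNoOrd1 : ¬ ∃ C D : Set V, C ∪ D = G.verts ∧
      ((∀ x y, G.Edge x y → x ∈ C \ D → y ∉ D \ C) ∨
       (∀ x y, G.Edge x y → x ∈ D \ C → y ∉ C \ D)) ∧
      (C ∩ D).ncard ≤ 1 ∧ T ⊆ C ∧ (D \ C).Nonempty)
    (A₁ B₁ A₂ B₂ : Set V)
    (hU₁ : A₁ ∪ B₁ = G.verts) (hU₂ : A₂ ∪ B₂ = G.verts)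
    (hord₁ : (A₁ ∩ B₁).ncard ≤ 2) (hord₂ : (A₂ ∩ B₂).ncard ≤ 2)
    (hE₁ : ∀ x y, G.Edge x y → x ∈ B₁ \ A₁ → y ∉ A₁ \ B₁)
    (hE₂ : ∀ x y, G.Edge x y → x ∈ B₂ \ A₂ → y ∉ A₂ \ B₂)
    (hT : T ⊆ A₁ ∩ A₂)
    (hmeet : ((B₁ \ A₁) ∩ (B₂ \ A₂)).Nonempty) :
    (A₁ ∩ A₂) ∪ (B₁ ∪ B₂) = G.verts ∧
    ((A₁ ∩ A₂) ∩ (B₁ ∪ B₂)).ncard ≤ 2 ∧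
    (∀ x y, G.Edge x y → x ∈ (B₁ ∪ B₂) \ (A₁ ∩ A₂) → y ∉ (A₁ ∩ A₂) \ (B₁ ∪ B₂)) ∧
    T ⊆ A₁ ∩ A₂ := by
  have h₁ : IsOneWaySeparation G.Edge G.verts A₁ B₁ := ⟨hU₁, hE₁⟩
  have h₂ : IsOneWaySeparation G.Edge G.verts A₂ B₂ := ⟨hU₂, hE₂⟩
  obtain ⟨h, order_le⟩ := stmt9_general
    (fun C D h hTC hproper ↦ h.succ_le_encard_of_not_exists G.finite hNoOrd1 hTC hproper) h₁ h₂
    ((h₁.encard_le_iff_ncard_le G.finite 2).mpr hord₁)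
    ((h₂.encard_le_iff_ncard_le G.finite 2).mpr hord₂)
    (hT.trans (Set.inter_subset_left.trans Set.subset_union_left)) hmeet
  exact ⟨h.union_eq, (h.encard_le_iff_ncard_le G.finite 2).mp order_le, h.notMem_of_edge, hT⟩
end

section
/- Let G be a digraph, let k ≥ 1, and let (A,B) be a directed separation of G of order less than k. Let C_1, …, C_k be pairwise vertex-disjoint directed cycles in G such that for every ordered pair of indices i ≠ j there exist k pairwise vertex-disjoint directed paths in G, each starting at a vertex of C_i and ending at a vertex of C_j. Then: (1) there is an index i with V(C_i) ∩ (A ∩ B) = ∅; (2) every cycle C_i with V(C_i) ∩ (A ∩ B) = ∅ satisfies V(C_i) ⊆ A \ B or V(C_i) ⊆ B \ A; and (3) there do not exist indices i and j with V(C_i) ⊆ A \ B and V(C_j) ⊆ B \ A. In particular, exactly one of the two sides A, B contains some cycle C_i entirely within A \ B respectively B \ A. -/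
/-- A directed cycle: pairwise distinct vertices `v₁, …, vₘ` with consecutive
edges and an edge from `vₘ` back to `v₁`. -/
def Dgraph.IsCycle {V : Type*} (G : Dgraph V) (p : List V) : Prop :=
  p ≠ [] ∧ p.Nodup ∧ p.Chain' G.Edge ∧ (∀ v ∈ p, v ∈ G.verts) ∧
  ∃ a b, p.head? = some a ∧ p.getLast? = some b ∧ G.Edge b a

/-!
A walk that starts in `A \ B` and avoids `A ∩ B` can never reach `B \ A` when no edge goes directly
from `A \ B` to `B \ A`. For a closed walk, which can be started at any of its vertices, this
forces all vertices onto one side. Fewer than `k` vertices cannot meet all members of a family of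
`k` disjoint vertex sets: applied to the cycles this yields a cycle avoiding `A ∩ B`, and applied to
`k` disjoint paths from a cycle in `A \ B` to a cycle in `B \ A` it yields a path avoiding `A ∩ B`,
which is impossible. If the edges are only forbidden from `B \ A` to `A \ B`, the paths in the
opposite direction do the same.
-/

section General

variable {V ι : Type*} {R : V → V → Prop} {A B X Y : Set V}

theorem exists_forall_notMem_of_encard_lt_card {s : Set V} {t : ι → Set V}
    (hs : s.encard < ENat.card ι) (ht : ∀ i j, i ≠ j → ∀ v, v ∈ t i → v ∉ t j) :
    ∃ i, ∀ v ∈ t i, v ∉ s := by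
  by_contra! hmeet
  choose f hft hfs using hmeet
  rw [← Set.encard_univ] at hs
  obtain ⟨i, -, j, -, hij, hf⟩ :=
    Set.exists_ne_map_eq_of_encard_lt_of_maps_to hs fun i _ => hfs i
  exact ht i j hij (f i) (hft i) (hf ▸ hft j)

theorem cycle_chain_imp_of_mem {R' : V → V → Prop} {c : Cycle V}
    (h : ∀ x y, x ∈ c → y ∈ c → R x y → R' x y) (hc : c.Chain R) : c.Chain R' := by
  induction c with
  | nil => exact Cycle.Chain.nil R'
  | cons a l =>
    rw [Cycle.chain_coe_cons] at hc ⊢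
    have hmem : ∀ x ∈ a :: (l ++ [a]), x ∈ (↑(a :: l) : Cycle V) := by simp [or_comm]
    exact hc.imp_of_mem_imp fun x y hx hy => h x y (hmem x hx) (hmem y hy)

theorem cycle_forall_mem_of_chain_of_mem {c : Cycle V} {p : V → Prop} {v : V}
    (hc : c.Chain fun x y => p x → p y) (hv : v ∈ c) (hpv : p v) : ∀ w ∈ c, p w := by
  have : IsTrans V fun x y => p x → p y := ⟨fun _ _ _ hxy hyz => hyz ∘ hxy⟩
  exact fun w hw => Cycle.chain_iff_pairwise.1 hc v hv w hw hpv

theorem cycle_forall_mem_of_chain {c : Cycle V} {p : V → Prop}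
    (hc : c.Chain fun _ y => p y) : ∀ w ∈ c, p w := by
  have : IsTrans V fun _ y => p y := ⟨fun _ _ _ _ hz => hz⟩
  exact fun w hw => Cycle.chain_iff_pairwise.1 hc w hw w hw

/-- One of the two orientations of a directed separation `(A, B)` of the digraph with edge relation
`R`: no edge goes from `A \ B` to `B \ A`. Of the covering condition only its consequence for heads
of edges is recorded, so that `V` may contain points that are not vertices of the digraph. -/
structure IsOneWaySeparation_s10 (R : V → V → Prop) (A B : Set V) : Prop where
  head_mem_union : ∀ ⦃x y⦄, R x y → y ∈ A ∪ B
  head_notMem_diff : ∀ ⦃x y⦄, R x y → x ∈ A \ B → y ∉ B \ A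

/-- A linkage from `X` to `Y`: a family of pairwise disjoint directed walks, each given by its list
of vertices, that start in `X` and end in `Y`. -/
structure IsLinkage (R : V → V → Prop) (P : ι → List V) (X Y : Set V) : Prop where
  isChain : ∀ a, (P a).IsChain R
  head_mem : ∀ a, ∃ x ∈ (P a).head?, x ∈ X
  getLast_mem : ∀ a, ∃ y ∈ (P a).getLast?, y ∈ Y
  disjoint : ∀ a b, a ≠ b → ∀ v, v ∈ P a → v ∉ P b

namespace IsOneWaySeparation_s10

theorem mem_diff_of_rel (h : IsOneWaySeparation_s10 R A B) {x y : V} (hxy : R x y)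
    (hy : y ∉ A ∩ B) (hx : x ∈ A \ B) : y ∈ A \ B := by
  have hyU := h.head_mem_union hxy
  have hyBA := h.head_notMem_diff hxy hx
  grind

theorem forall_mem_diff_of_isChain (h : IsOneWaySeparation_s10 R A B) {l : List V} (hl : l.IsChain R)
    (hlAB : ∀ v ∈ l, v ∉ A ∩ B) {x : V} (hx : x ∈ l.head?) (hxA : x ∈ A \ B) :
    ∀ v ∈ l, v ∈ A \ B := by
  have hstep : l.IsChain fun u v => u ∈ A \ B → v ∈ A \ B :=
    hl.imp_of_mem_imp fun u v _ hv huv => h.mem_diff_of_rel huv (hlAB v hv)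
  refine hstep.induction (· ∈ A \ B) l (fun _ _ huv => huv) fun hne => ?_
  rwa [← List.head_of_mem_head? hx] at hxA

theorem cycle_mem_diff_or_mem_diff (h : IsOneWaySeparation_s10 R A B) {c : Cycle V} (hc : c.Chain R)
    (hcAB : ∀ v ∈ c, v ∉ A ∩ B) : (∀ v ∈ c, v ∈ A \ B) ∨ (∀ v ∈ c, v ∈ B \ A) := by
  by_cases hA : ∃ v ∈ c, v ∈ A \ B
  · obtain ⟨v, hv, hvA⟩ := hA
    have hstep : c.Chain fun x y => x ∈ A \ B → y ∈ A \ B :=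
      cycle_chain_imp_of_mem (fun x y _ hy hxy => h.mem_diff_of_rel hxy (hcAB y hy)) hc
    exact .inl (cycle_forall_mem_of_chain_of_mem hstep hv hvA)
  · have hcU : ∀ v ∈ c, v ∈ A ∪ B :=
      cycle_forall_mem_of_chain (hc.imp fun _ _ hxy => h.head_mem_union hxy)
    exact .inr (by grind)

theorem not_isLinkage (h : IsOneWaySeparation_s10 R A B) (hord : (A ∩ B).encard < ENat.card ι)
    (hX : X ⊆ A \ B) (hY : Y ⊆ B \ A) (P : ι → List V) : ¬ IsLinkage R P X Y := by
  intro hP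
  obtain ⟨a, ha⟩ :=
    exists_forall_notMem_of_encard_lt_card (t := fun a => {v | v ∈ P a}) hord hP.disjoint
  obtain ⟨x, hx, hxX⟩ := hP.head_mem a
  obtain ⟨y, hy, hyY⟩ := hP.getLast_mem a
  have hyA : y ∈ A \ B :=
    h.forall_mem_diff_of_isChain (hP.isChain a) ha hx (hX hxX) y (List.mem_of_getLast? hy)
  exact hyA.2 (hY hyY).1

end IsOneWaySeparation_s10

end General

namespace Dgraph

variable {V ι : Type*} {G : Dgraph V}

theorem isOneWaySeparation_edge {A B : Set V} (hU : A ∪ B = G.verts)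
    (h : ∀ x y, G.Edge x y → x ∈ A \ B → y ∉ B \ A) : IsOneWaySeparation_s10 G.Edge A B :=
  ⟨fun _ _ hxy => hU ▸ (G.mem_of_edge hxy).2, h⟩

theorem IsCycle.chain_edge {p : List V} (hp : G.IsCycle p) : (p : Cycle V).Chain G.Edge := by
  obtain ⟨hne, -, hchain, -, a, b, ha, hb, hba⟩ := hp
  rw [Cycle.chain_ne_nil _ hne, List.getLast_of_mem_getLast? hb]
  exact hchain.cons fun y hy => Option.mem_unique ha hy ▸ hba

theorem isLinkage_edge {P : ι → List V} {X Y : Set V}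
    (hP : ∀ a, ∃ x y, G.PathFrom (P a) x y ∧ x ∈ X ∧ y ∈ Y)
    (hdisj : ∀ a b, a ≠ b → ∀ v, v ∈ P a → v ∉ P b) : IsLinkage G.Edge P X Y where
  isChain a := let ⟨_, _, ⟨hpath, _, _⟩, _⟩ := hP a; hpath.2.2.1
  head_mem a := let ⟨x, _, ⟨_, hx, _⟩, hxX, _⟩ := hP a; ⟨x, hx, hxX⟩
  getLast_mem a := let ⟨_, y, ⟨_, _, hy⟩, _, hyY⟩ := hP a; ⟨y, hy, hyY⟩
  disjoint := hdisj

end Dgraph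

theorem stmt10_general {V ι : Type*} {R : V → V → Prop} {A B : Set V}
    (hSep : IsOneWaySeparation_s10 R A B ∨ IsOneWaySeparation_s10 R B A)
    (hord : (A ∩ B).encard < ENat.card ι) (C : ι → Cycle V)
    (hCne : ∀ i, ∃ v, v ∈ C i) (hC : ∀ i, (C i).Chain R)
    (hCdisj : ∀ i j, i ≠ j → ∀ v, v ∈ C i → v ∉ C j)
    (hlink : ∀ i j, i ≠ j → ∃ P : ι → List V, IsLinkage R P {v | v ∈ C i} {v | v ∈ C j}) :
    (∃ i, ∀ v ∈ C i, v ∉ A ∩ B) ∧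
    (∀ i, (∀ v ∈ C i, v ∉ A ∩ B) →
      (∀ v ∈ C i, v ∈ A \ B) ∨ (∀ v ∈ C i, v ∈ B \ A)) ∧
    (¬ ∃ i j, (∀ v ∈ C i, v ∈ A \ B) ∧ (∀ v ∈ C j, v ∈ B \ A)) ∧
    Xor (∃ i, ∀ v ∈ C i, v ∈ A \ B) (∃ i, ∀ v ∈ C i, v ∈ B \ A) := by
  have havoid : ∃ i, ∀ v ∈ C i, v ∉ A ∩ B :=
    exists_forall_notMem_of_encard_lt_card (t := fun i => {v | v ∈ C i}) hord hCdisj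
  have hside : ∀ i, (∀ v ∈ C i, v ∉ A ∩ B) →
      (∀ v ∈ C i, v ∈ A \ B) ∨ (∀ v ∈ C i, v ∈ B \ A) := fun i hi =>
    hSep.elim (fun h => h.cycle_mem_diff_or_mem_diff (hC i) hi)
      fun h => (h.cycle_mem_diff_or_mem_diff (hC i) (Set.inter_comm A B ▸ hi)).symm
  have hopposite : ¬ ∃ i j, (∀ v ∈ C i, v ∈ A \ B) ∧ (∀ v ∈ C j, v ∈ B \ A) := by
    rintro ⟨i, j, hi, hj⟩
    have hij : i ≠ j := by
      rintro rfl
      obtain ⟨v, hv⟩ := hCne i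
      exact (hi v hv).2 (hj v hv).1
    obtain ⟨P, hP⟩ := hlink i j hij
    obtain ⟨Q, hQ⟩ := hlink j i hij.symm
    exact hSep.elim (fun h => h.not_isLinkage hord hi hj P hP)
      fun h => h.not_isLinkage (Set.inter_comm A B ▸ hord) hj hi Q hQ
  refine ⟨havoid, hside, hopposite, ?_⟩
  obtain ⟨i, hi⟩ := havoid
  exact (hside i hi).imp (fun hiA => ⟨⟨i, hiA⟩, fun ⟨j, hjB⟩ => hopposite ⟨i, j, hiA, hjB⟩⟩)
    fun hiB => ⟨⟨i, hiB⟩, fun ⟨j, hjA⟩ => hopposite ⟨j, i, hjA, hiB⟩⟩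

/-- Let `(A, B)` be a directed separation of order `< k` and
let `C 1, …, C k` be pairwise vertex-disjoint directed cycles such that for each
ordered pair `i ≠ j` there are `k` pairwise vertex-disjoint directed paths from
`C i` to `C j`.  Then some cycle avoids `A ∩ B`; every cycle avoiding `A ∩ B`
lies entirely in `A \ B` or entirely in `B \ A`; no two cycles lie in `A \ B`
and in `B \ A` respectively; and hence exactly one of the two sides contains a
cycle entirely. -/
theorem stmt10 {V : Type*} (G : Dgraph V) (k : ℕ) (hk : 1 ≤ k)
    (A B : Set V) (hU : A ∪ B = G.verts)
    (hSep : (∀ x y, G.Edge x y → x ∈ A \ B → y ∉ B \ A) ∨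
            (∀ x y, G.Edge x y → x ∈ B \ A → y ∉ A \ B))
    (hord : (A ∩ B).ncard < k)
    (C : Fin k → List V)
    (hC : ∀ i, G.IsCycle (C i))
    (hCdisj : ∀ i j, i ≠ j → ∀ v, v ∈ C i → v ∉ C j)
    (hlink : ∀ i j, i ≠ j → ∃ P : Fin k → List V,
      (∀ a, ∃ x y, G.PathFrom (P a) x y ∧ x ∈ C i ∧ y ∈ C j) ∧
      (∀ a b, a ≠ b → ∀ v, v ∈ P a → v ∉ P b)) :
    (∃ i, ∀ v ∈ C i, v ∉ A ∩ B) ∧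
    (∀ i, (∀ v ∈ C i, v ∉ A ∩ B) →
      (∀ v ∈ C i, v ∈ A \ B) ∨ (∀ v ∈ C i, v ∈ B \ A)) ∧
    (¬ ∃ i j, (∀ v ∈ C i, v ∈ A \ B) ∧ (∀ v ∈ C j, v ∈ B \ A)) ∧
    Xor' (∃ i, ∀ v ∈ C i, v ∈ A \ B) (∃ i, ∀ v ∈ C i, v ∈ B \ A) := by
  have hfin : (A ∩ B).Finite :=
    G.finite.subset (hU ▸ Set.inter_subset_left.trans Set.subset_union_left)
  exact stmt10_general
    (hSep.imp (Dgraph.isOneWaySeparation_edge hU)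
      (Dgraph.isOneWaySeparation_edge ((Set.union_comm B A).trans hU)))
    (by simpa [← hfin.cast_ncard_eq] using hord) (fun i => (C i : Cycle V))
    (fun i => List.exists_mem_of_ne_nil _ (hC i).1) (fun i => (hC i).chain_edge) hCdisj
    fun i j hij => (hlink i j hij).imp fun _ ⟨hP, hdisj⟩ => Dgraph.isLinkage_edge hP hdisj
end

section
/- Let c ≥ 2 and let G be a digraph containing the switch gadget S(c) such that the set of edges of G between two gadget vertices is exactly the edge set of S(c), and every edge of G between a gadget vertex and a non-gadget vertex either has its head in {b, x, d, u, u'} and its tail outside the gadget, or has its tail in {a, e, y, v, v'} and its head outside the gadget. Let 𝒫 be a family of 3c−1 pairwise distinct directed paths in G such that every vertex of G lies on at most c paths of 𝒫, no path of 𝒫 has its first or last vertex in the gadget, exactly c paths of 𝒫 contain the vertex a (the red paths), exactly c other paths of 𝒫 contain an edge of G whose head is b (entering at b), and the remaining c−1 paths of 𝒫 each contain an edge of G whose head is x (entering at x); the 2c−1 paths entering at b or at x are the blue paths. Then: (1) every red path contains the vertex d and contains an edge of G whose head is d and whose tail is outside the gadget; (2) exactly c−1 of the blue paths contain an edge of G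 whose tail is y and whose head is outside the gadget, and exactly c of the blue paths contain an edge of G whose tail is e and whose head is outside the gadget; (3) the vertex x lies on exactly c of the paths of 𝒫, and the vertex y lies on exactly c of the paths of 𝒫; and (4) either both g and h lie on exactly c of the paths of 𝒫 each, or both g' and h' lie on exactly c of the paths of 𝒫 each. -/
/-- Labels for the vertices of the switch gadget `S(c)`: seventeen named
vertices together with the indexed families `p i, q i, ℓ i, r i, w i, w' i`
(meaningful for `1 ≤ i ≤ c`). -/
inductive SL where
  | a | b | d | e | f | f' | x | y | z | g | g' | h | h' | u | u' | v | v'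
  | p (i : ℕ) | q (i : ℕ) | l (i : ℕ) | r (i : ℕ) | w (i : ℕ) | w' (i : ℕ)

/-- Validity of a label for the gadget `S(c)`: indexed labels must have index
in `{1, …, c}`. -/
def SL.Valid (c : ℕ) : SL → Prop
  | .p i => 1 ≤ i ∧ i ≤ c
  | .q i => 1 ≤ i ∧ i ≤ c
  | .l i => 1 ≤ i ∧ i ≤ c
  | .r i => 1 ≤ i ∧ i ≤ c
  | .w i => 1 ≤ i ∧ i ≤ c
  | .w' i => 1 ≤ i ∧ i ≤ c
  | _ => True

/-- The edge set of the switch gadget `S(c)`. -/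
def SEdge (c : ℕ) : SL → SL → Prop := fun s t =>
  (s = .b ∧ t = .p 1) ∨
  (∃ i, 1 ≤ i ∧ i + 1 ≤ c ∧ s = .p i ∧ t = .p (i + 1)) ∨
  (s = .p c ∧ t = .x) ∨
  (∃ i, 1 ≤ i ∧ i ≤ c ∧ s = .p i ∧ t = .a) ∨
  (s = .b ∧ t = .q 1) ∨
  (∃ i, 1 ≤ i ∧ i + 1 ≤ c ∧ s = .q i ∧ t = .q (i + 1)) ∨
  (s = .q c ∧ t = .f') ∨
  (∃ i, 1 ≤ i ∧ i ≤ c ∧ s = .q i ∧ t = .p i) ∨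
  (∃ i, 1 ≤ i ∧ i ≤ c ∧ s = .x ∧ t = .r i) ∨
  (∃ i, 1 ≤ i ∧ i + 1 ≤ c ∧ s = .r (i + 1) ∧ t = .r i) ∨
  (s = .z ∧ t = .r c) ∨
  (∃ i, 1 ≤ i ∧ i ≤ c ∧ s = .r i ∧ t = .l i) ∨
  (∃ i, 2 ≤ i ∧ i ≤ c ∧ s = .r 1 ∧ t = .q i) ∨
  (∃ i, 1 ≤ i ∧ i + 1 ≤ c ∧ s = .l (i + 1) ∧ t = .l i) ∨
  (s = .y ∧ t = .l c) ∨
  (∃ i, 1 ≤ i ∧ i ≤ c ∧ s = .l i ∧ t = .f) ∨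
  (s = .l 1 ∧ t = .q 1) ∨
  ((s = .f ∨ s = .f') ∧ (t = .w 1 ∨ t = .w' 1)) ∨
  (∃ i, 1 ≤ i ∧ i + 1 ≤ c ∧
    ((s = .w i ∧ t = .w (i + 1)) ∨ (s = .w' i ∧ t = .w' (i + 1)))) ∨
  (∃ i, 1 ≤ i ∧ i + 1 ≤ c ∧ (s = .w i ∨ s = .w' i) ∧ t = .z) ∨
  ((s = .w c ∨ s = .w' c) ∧ t = .y) ∨
  (s = .w c ∧ t = .g) ∨
  (s = .w' c ∧ t = .g') ∨
  (∃ i, 1 ≤ i ∧ i ≤ c ∧ ((s = .g ∧ t = .w i) ∨ (s = .g' ∧ t = .w' i))) ∨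
  (s = .v ∧ t = .g) ∨ (s = .v' ∧ t = .g') ∨
  (s = .h ∧ t = .v) ∨ (s = .h' ∧ t = .v') ∨
  (s = .u ∧ t = .h) ∨ (s = .u' ∧ t = .h') ∨
  (s = .d ∧ t = .h) ∨ (s = .d ∧ t = .h') ∨
  (s = .g ∧ t = .u') ∨ (s = .g' ∧ t = .u) ∨
  (s = .u ∧ t = .e) ∨ (s = .u' ∧ t = .e)

/-!
Capacity counting forces every path through the gadget. Along each of the rows `q`, `r` and `w`,
`c - 1` paths run through the whole row, and `c` others use at least one of its `c` vertices each.
Since a vertex lies on at most `c` paths, the row is saturated: each of the `c` others uses exactly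
one of its vertices, and no further path touches it.

* Row `q`: the blue paths avoiding `x` run along it, each red path crosses it once. So `x` is full.
* Row `r`: the red paths avoiding `q_1` come from `z` and run along it, each blue path through `x`
  crosses it once and then goes down to `f`. So no blue path visits `z`.
* Row `w`: all `2c - 1` blue paths run along row `w` or row `w'`. One of the two is filled by `c` of
  them, say `w'`; the remaining `c - 1` run along `w`, which each red path, coming from `g`, crosses
  once.

Filling `g` and `h` by the red paths pushes the blue paths of row `w` out at `y`, while those of row
`w'` fill `u` and leave at `e`; hence the red paths entered `h` from `d`.
-/

section Saturation

variable {I α : Type*} [Finite I] {T : I → α → Prop} {A B : Set I} {J : Set α}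

theorem setOf_eq_insert_of_ncard_le {i : I} {j : α} (hi : i ∉ A) (hA : ∀ a ∈ A, T a j)
    (hT : T i j) (hcap : {i | T i j}.ncard ≤ A.ncard + 1) : {i | T i j} = insert i A := by
  refine (Set.eq_of_subset_of_ncard_le (t := {i | T i j}) (Set.insert_subset hT hA) ?_).symm
  rwa [Set.ncard_insert_of_notMem hi]

theorem saturated_of_ncard_le (hJ : J.Finite) (hAB : Disjoint A B)
    (hA : ∀ i ∈ A, ∀ j ∈ J, T i j) (hB : ∀ i ∈ B, ∃ j ∈ J, T i j) (hJB : J.ncard ≤ B.ncard)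
    (hcap : ∀ j ∈ J, {i | T i j}.ncard ≤ A.ncard + 1) :
    (∀ j ∈ J, ∃ i ∈ B, {i | T i j} = insert i A) ∧
      ∀ i ∈ B, ∀ j ∈ J, ∀ k ∈ J, T i j → T i k → j = k := by
  have hdisj : ∀ i ∈ B, i ∉ A := fun i hi => Set.disjoint_right.1 hAB hi
  choose f hfJ hfT using hB
  have huser : ∀ i hi, {k | T k (f i hi)} = insert i A := fun i hi =>
    setOf_eq_insert_of_ncard_le (hdisj i hi) (fun a ha => hA a ha _ (hfJ i hi)) (hfT i hi)
      (hcap _ (hfJ i hi))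
  have heq : ∀ i hi i' (_ : i' ∈ B), T i' (f i hi) → i' = i := fun i hi i' hi' h =>
    ((huser i hi).subset h).resolve_right (hdisj i' hi')
  have hsurj : ∀ j ∈ J, ∃ i hi, j = f i hi :=
    Set.surj_on_of_inj_on_of_ncard_le f hfJ
      (fun i i' hi hi' h => heq i' hi' i hi (h ▸ hfT i hi)) hJB hJ
  have hf : ∀ i hi, ∀ j ∈ J, T i j → j = f i hi := by
    intro i hi j hj hT
    obtain ⟨i', hi', rfl⟩ := hsurj j hj
    obtain rfl := heq i' hi' i hi hT
    rfl
  refine ⟨fun j hj => ?_, fun i hi j hj k hk hTj hTk =>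
    (hf i hi j hj hTj).trans (hf i hi k hk hTk).symm⟩
  obtain ⟨i, hi, rfl⟩ := hsurj j hj
  exact ⟨i, hi, huser i hi⟩

end Saturation

theorem forall_between_of_step {Q : ℕ → Prop} {m n : ℕ} (hm : Q m)
    (step : ∀ k, m ≤ k → k < n → Q k → Q (k + 1)) : ∀ k, m ≤ k → k ≤ n → Q k := by
  intro k hk
  induction k, hk using Nat.le_induction with
  | base => exact fun _ => hm
  | succ k hk ih => exact fun hn => step k hk hn (ih (Nat.le_of_succ_le hn))

/-- `p` traverses the step from `x` to `y`: the two occur consecutively, in this order. -/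
def Traverses {V : Type*} (p : List V) (x y : V) : Prop :=
  ∃ n, p[n]? = some x ∧ p[n + 1]? = some y

namespace Traverses

variable {V : Type*} {p : List V} {x x' y y' : V}

theorem mem_left (h : Traverses p x y) : x ∈ p := List.mem_of_getElem? h.choose_spec.1

theorem mem_right (h : Traverses p x y) : y ∈ p := List.mem_of_getElem? h.choose_spec.2

theorem index_unique (hp : p.Nodup) {m n : ℕ} (hm : p[m]? = some x) (hn : p[n]? = some x) :
    m = n :=
  (List.getElem?_inj (List.getElem?_eq_some_iff.1 hm).1 hp).1 (hm.trans hn.symm)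

theorem right_unique (hp : p.Nodup) (h : Traverses p x y) (h' : Traverses p x y') : y = y' := by
  obtain ⟨m, hx, hy⟩ := h
  obtain ⟨n, hx', hy'⟩ := h'
  obtain rfl := index_unique hp hx hx'
  exact Option.some.inj (hy.symm.trans hy')

theorem left_unique (hp : p.Nodup) (h : Traverses p x y) (h' : Traverses p x' y) : x = x' := by
  obtain ⟨m, hx, hy⟩ := h
  obtain ⟨n, hx', hy'⟩ := h'
  obtain rfl := Nat.succ.inj (index_unique hp hy hy')
  exact Option.some.inj (hx.symm.trans hx')

theorem rel_of_isChain {r : V → V → Prop} (hp : p.IsChain r) (h : Traverses p x y) : r x y := by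
  obtain ⟨n, hx, hy⟩ := h
  obtain ⟨_, rfl⟩ := List.getElem?_eq_some_iff.1 hx
  obtain ⟨hn, rfl⟩ := List.getElem?_eq_some_iff.1 hy
  exact List.isChain_iff_getElem.1 hp n hn

theorem exists_right (hx : x ∈ p) (hlast : p.getLast? ≠ some x) : ∃ y, Traverses p x y := by
  obtain ⟨n, hn, rfl⟩ := List.mem_iff_getElem.1 hx
  have hn' : n + 1 < p.length := by
    by_contra hlen
    obtain rfl : n = p.length - 1 := by omega
    exact hlast (by rw [List.getLast?_eq_getElem?, List.getElem?_eq_getElem])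
  exact ⟨p[n + 1], n, List.getElem?_eq_getElem hn, List.getElem?_eq_getElem hn'⟩

theorem exists_left (hy : y ∈ p) (hhead : p.head? ≠ some y) : ∃ x, Traverses p x y := by
  obtain ⟨n, hn, rfl⟩ := List.mem_iff_getElem.1 hy
  cases n with
  | zero => exact absurd (by rw [List.head?_eq_getElem?, List.getElem?_eq_getElem]) hhead
  | succ n =>
    exact ⟨p[n], n, List.getElem?_eq_getElem (Nat.lt_of_succ_lt hn), List.getElem?_eq_getElem hn⟩

end Traverses

namespace SL

/-- The symmetry of `S(c)` that exchanges the primed and unprimed copies of `g`, `h`, `u`, `v` and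
of the row `w`. It fixes `f` and `f'`. -/
def swap : SL → SL
  | .g => .g' | .g' => .g | .h => .h' | .h' => .h | .u => .u' | .u' => .u
  | .v => .v' | .v' => .v | .w i => .w' i | .w' i => .w i | s => s

theorem swap_involutive : Function.Involutive swap := fun s => by cases s <;> rfl

theorem valid_swap {c : ℕ} {s : SL} : (swap s).Valid c ↔ s.Valid c := by cases s <;> rfl

theorem sEdge_swap {c : ℕ} {s t : SL} (h : SEdge c s t) : SEdge c (swap s) (swap t) := by
  unfold SEdge at h
  casesm* _ ∨ _, _ ∧ _, ∃ _, _ <;> subst_vars <;> simp [SEdge, swap] <;> omega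

end SL

/-- A digraph `G` with a copy `ι` of the switch gadget, together with a family of paths that meets
the hypotheses of the theorem. Repeated paths are allowed, and `G` may lack some of the edges of
`S(c)`. `viaB` and `viaX` are the sets of blue paths of the two kinds; their members are only
required to visit `b` and `x` respectively. -/
structure SwitchRouting (V I : Type*) where
  c : ℕ
  pos : 0 < c
  G : Dgraph V
  ι : SL → V
  gadget : Set V
  gadget_eq : gadget = ι '' {s | s.Valid c}
  injOn : Set.InjOn ι {s | s.Valid c}
  sEdge_of_edge : ∀ s t : SL, s.Valid c → t.Valid c → G.Edge (ι s) (ι t) → SEdge c s t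
  boundary : ∀ z w : V, G.Edge z w → ((z ∈ gadget ∧ w ∉ gadget) ∨ (z ∉ gadget ∧ w ∈ gadget)) →
    (w ∈ ({ι .b, ι .x, ι .d, ι .u, ι .u'} : Set V) ∧ z ∉ gadget) ∨
    (z ∈ ({ι .a, ι .e, ι .y, ι .v, ι .v'} : Set V) ∧ w ∉ gadget)
  path : I → List V
  isPath : ∀ i, G.IsPath (path i)
  ncard_mem_path_le : ∀ s : SL, s.Valid c → {i | ι s ∈ path i}.ncard ≤ c
  ends_notMem : ∀ i z, ((path i).head? = some z ∨ (path i).getLast? = some z) → z ∉ gadget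
  viaB : Set I
  viaX : Set I
  ncard_red : {i | ι .a ∈ path i}.ncard = c
  ncard_viaB : viaB.ncard = c
  ncard_viaX : viaX.ncard = c - 1
  disjoint_red_viaB : Disjoint {i | ι .a ∈ path i} viaB
  disjoint_red_viaX : Disjoint {i | ι .a ∈ path i} viaX
  disjoint_viaB_viaX : Disjoint viaB viaX
  cover : {i | ι .a ∈ path i} ∪ viaB ∪ viaX = Set.univ
  b_mem_path : ∀ i ∈ viaB, ι .b ∈ path i
  x_mem_path : ∀ i ∈ viaX, ι .x ∈ path i

namespace SwitchRouting

variable {V I : Type*} (S : SwitchRouting V I) {i : I} {s s' t t' : SL} {j k : ℕ}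

/-- The red paths: those through `a`. All other paths are blue. -/
def red : Set I := {i | S.ι .a ∈ S.path i}

/-- The `i`-th path visits the gadget vertex labelled `s`. Validity is included because `ι` is
unconstrained on labels whose index is out of range. -/
def Visits (i : I) (s : SL) : Prop := s.Valid S.c ∧ S.ι s ∈ S.path i

/-- The `i`-th path steps from the gadget vertex labelled `s` to the one labelled `t`. -/
def Next (i : I) (s t : SL) : Prop :=
  s.Valid S.c ∧ t.Valid S.c ∧ Traverses (S.path i) (S.ι s) (S.ι t)

/-- The `i`-th path leaves the gadget from the vertex labelled `s`. -/
def Leaves (i : I) (s : SL) : Prop :=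
  ∃ n z, (S.path i)[n]? = some (S.ι s) ∧ (S.path i)[n + 1]? = some z ∧ z ∉ S.gadget

/-- The `i`-th path enters the gadget at the vertex labelled `s`. -/
def Enters (i : I) (s : SL) : Prop :=
  ∃ n z, (S.path i)[n]? = some z ∧ (S.path i)[n + 1]? = some (S.ι s) ∧ z ∉ S.gadget

variable {S}

theorem Next.left (h : S.Next i s t) : S.Visits i s := ⟨h.1, h.2.2.mem_left⟩

theorem Next.right (h : S.Next i s t) : S.Visits i t := ⟨h.2.1, h.2.2.mem_right⟩

theorem Next.right_unique (h : S.Next i s t) (h' : S.Next i s t') : t = t' :=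
  S.injOn h.2.1 h'.2.1 (h.2.2.right_unique (S.isPath i).2.1 h'.2.2)

theorem Next.left_unique (h : S.Next i s t) (h' : S.Next i s' t) : s = s' :=
  S.injOn h.1 h'.1 (h.2.2.left_unique (S.isPath i).2.1 h'.2.2)

theorem Next.sEdge (h : S.Next i s t) : SEdge S.c s t :=
  S.sEdge_of_edge s t h.1 h.2.1 (h.2.2.rel_of_isChain (S.isPath i).2.2.1)

theorem Leaves.visits (hs : s.Valid S.c) (h : S.Leaves i s) : S.Visits i s :=
  let ⟨_, _, hn, _⟩ := h
  ⟨hs, List.mem_of_getElem? hn⟩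

variable (S)

theorem ι_mem_gadget (hs : s.Valid S.c) : S.ι s ∈ S.gadget := S.gadget_eq ▸ ⟨s, hs, rfl⟩

theorem exists_next_or_leaves (h : S.Visits i s) :
    (∃ t, SEdge S.c s t ∧ S.Next i s t) ∨
      S.Leaves i s ∧ (s = .a ∨ s = .e ∨ s = .y ∨ s = .v ∨ s = .v') := by
  obtain ⟨hs, hmem⟩ := h
  have hgad := S.ι_mem_gadget hs
  obtain ⟨z, hz⟩ := Traverses.exists_right hmem fun hl => S.ends_notMem i _ (.inr hl) hgad
  by_cases hzG : z ∈ S.gadget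
  · obtain ⟨t, ht, rfl⟩ := S.gadget_eq ▸ hzG
    have hnext : S.Next i s t := ⟨hs, ht, hz⟩
    exact .inl ⟨t, hnext.sEdge, hnext⟩
  · obtain ⟨n, hn, hn'⟩ := hz
    refine .inr ⟨⟨n, z, hn, hn', hzG⟩, ?_⟩
    have hedge := Traverses.rel_of_isChain (S.isPath i).2.2.1 ⟨n, hn, hn'⟩
    obtain ⟨-, hout⟩ | ⟨hs', -⟩ := S.boundary _ _ hedge (.inl ⟨hgad, hzG⟩)
    · exact absurd hgad hout
    · exact hs'.imp (S.injOn hs trivial) <| .imp (S.injOn hs trivial) <|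
        .imp (S.injOn hs trivial) <| .imp (S.injOn hs trivial) (S.injOn hs trivial)

theorem exists_prev_or_enters (h : S.Visits i t) :
    (∃ s, SEdge S.c s t ∧ S.Next i s t) ∨
      S.Enters i t ∧ (t = .b ∨ t = .x ∨ t = .d ∨ t = .u ∨ t = .u') := by
  obtain ⟨ht, hmem⟩ := h
  have hgad := S.ι_mem_gadget ht
  obtain ⟨z, hz⟩ := Traverses.exists_left hmem fun hl => S.ends_notMem i _ (.inl hl) hgad
  by_cases hzG : z ∈ S.gadget
  · obtain ⟨s, hs, rfl⟩ := S.gadget_eq ▸ hzG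
    have hnext : S.Next i s t := ⟨hs, ht, hz⟩
    exact .inl ⟨s, hnext.sEdge, hnext⟩
  · obtain ⟨n, hn, hn'⟩ := hz
    refine .inr ⟨⟨n, z, hn, hn', hzG⟩, ?_⟩
    have hedge := Traverses.rel_of_isChain (S.isPath i).2.2.1 ⟨n, hn, hn'⟩
    obtain ⟨ht', -⟩ | ⟨-, hout⟩ := S.boundary _ _ hedge (.inr ⟨hzG, hgad⟩)
    · exact ht'.imp (S.injOn ht trivial) <| .imp (S.injOn ht trivial) <|
        .imp (S.injOn ht trivial) <| .imp (S.injOn ht trivial) (S.injOn ht trivial)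
    · exact absurd hgad hout

/-- The same routing with the labels of the gadget permuted by `SL.swap`. -/
def swap : SwitchRouting V I where
  __ := S
  ι := S.ι ∘ SL.swap
  gadget_eq := by
    have hvalid : SL.swap '' {s | s.Valid S.c} = {s | s.Valid S.c} := by
      rw [SL.swap_involutive.image_eq_preimage_symm]
      exact Set.ext fun s => SL.valid_swap
    rw [Set.image_comp, hvalid, S.gadget_eq]
  injOn := S.injOn.comp SL.swap_involutive.injective.injOn fun s hs => SL.valid_swap.2 hs
  sEdge_of_edge s t hs ht h := by
    have hswap := SL.sEdge_swap (S.sEdge_of_edge _ _ (SL.valid_swap.2 hs) (SL.valid_swap.2 ht) h)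
    rwa [SL.swap_involutive s, SL.swap_involutive t] at hswap
  boundary z w h hzw := by
    have := S.boundary z w h hzw
    simp only [Function.comp_apply, SL.swap]
    rwa [Set.pair_comm (S.ι .u'), Set.pair_comm (S.ι .v')]
  ncard_mem_path_le s hs := S.ncard_mem_path_le _ (SL.valid_swap.2 hs)

variable {S}

section Steps

theorem next_b (h : S.Visits i .b) : S.Next i .b (.p 1) ∨ S.Next i .b (.q 1) := by
  have hstep := S.exists_next_or_leaves h
  grind [SEdge]

theorem next_p (h : S.Visits i (.p j)) :
    j < S.c ∧ S.Next i (.p j) (.p (j + 1)) ∨ j = S.c ∧ S.Next i (.p j) .x ∨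
      S.Next i (.p j) .a := by
  have hstep := S.exists_next_or_leaves h
  grind [SEdge]

theorem next_q (h : S.Visits i (.q j)) :
    j < S.c ∧ S.Next i (.q j) (.q (j + 1)) ∨ j = S.c ∧ S.Next i (.q j) .f' ∨
      S.Next i (.q j) (.p j) := by
  have hstep := S.exists_next_or_leaves h
  grind [SEdge]

theorem next_x (h : S.Visits i .x) : ∃ j, S.Next i .x (.r j) := by
  have hstep := S.exists_next_or_leaves h
  grind [SEdge]

theorem next_r (h : S.Visits i (.r j)) :
    S.Next i (.r j) (.l j) ∨ (∃ k, j = k + 1 ∧ S.Next i (.r j) (.r k)) ∨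
      ∃ k, S.Next i (.r j) (.q k) := by
  have hstep := S.exists_next_or_leaves h
  grind [SEdge]

theorem next_l (h : S.Visits i (.l j)) :
    S.Next i (.l j) .f ∨ (∃ k, j = k + 1 ∧ S.Next i (.l j) (.l k)) ∨
      j = 1 ∧ S.Next i (.l j) (.q 1) := by
  have hstep := S.exists_next_or_leaves h
  grind [SEdge]

theorem next_f (h : S.Visits i .f) : S.Next i .f (.w 1) ∨ S.Next i .f (.w' 1) := by
  have hstep := S.exists_next_or_leaves h
  grind [SEdge]

theorem next_f' (h : S.Visits i .f') : S.Next i .f' (.w 1) ∨ S.Next i .f' (.w' 1) := by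
  have hstep := S.exists_next_or_leaves h
  grind [SEdge]

theorem next_w (h : S.Visits i (.w j)) :
    j < S.c ∧ S.Next i (.w j) (.w (j + 1)) ∨ j = S.c ∧ S.Next i (.w j) .g ∨
      S.Next i (.w j) .z ∨ j = S.c ∧ S.Next i (.w j) .y := by
  have hstep := S.exists_next_or_leaves h
  grind [SEdge]

theorem next_y (h : S.Visits i .y) : S.Next i .y (.l S.c) ∨ S.Leaves i .y := by
  have hstep := S.exists_next_or_leaves h
  grind [SEdge]

theorem next_z (h : S.Visits i .z) : S.Next i .z (.r S.c) := by
  have hstep := S.exists_next_or_leaves h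
  grind [SEdge]

theorem next_g (h : S.Visits i .g) : (∃ j, S.Next i .g (.w j)) ∨ S.Next i .g .u' := by
  have hstep := S.exists_next_or_leaves h
  grind [SEdge]

theorem next_u (h : S.Visits i .u) : S.Next i .u .h ∨ S.Next i .u .e := by
  have hstep := S.exists_next_or_leaves h
  grind [SEdge]

theorem prev_a (h : S.Visits i .a) : ∃ j, S.Next i (.p j) .a := by
  have hstep := S.exists_prev_or_enters h
  grind [SEdge]

theorem prev_p (h : S.Visits i (.p j)) :
    S.Next i .b (.p j) ∨ (∃ k, j = k + 1 ∧ S.Next i (.p k) (.p j)) ∨ S.Next i (.q j) (.p j) := by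
  have hstep := S.exists_prev_or_enters h
  grind [SEdge]

theorem prev_q (h : S.Visits i (.q j)) :
    S.Next i .b (.q j) ∨ (∃ k, j = k + 1 ∧ S.Next i (.q k) (.q j)) ∨
      j = 1 ∧ S.Next i (.l 1) (.q j) ∨ j ≠ 1 ∧ S.Next i (.r 1) (.q j) := by
  have hstep := S.exists_prev_or_enters h
  grind [SEdge]

theorem prev_r (h : S.Visits i (.r j)) :
    S.Next i .x (.r j) ∨ j < S.c ∧ S.Next i (.r (j + 1)) (.r j) ∨
      j = S.c ∧ S.Next i .z (.r j) := by
  have hstep := S.exists_prev_or_enters h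
  grind [SEdge]

theorem prev_l (h : S.Visits i (.l j)) :
    S.Next i (.r j) (.l j) ∨ j < S.c ∧ S.Next i (.l (j + 1)) (.l j) ∨
      j = S.c ∧ S.Next i .y (.l j) := by
  have hstep := S.exists_prev_or_enters h
  grind [SEdge]

theorem prev_f' (h : S.Visits i .f') : S.Next i (.q S.c) .f' := by
  have hstep := S.exists_prev_or_enters h
  grind [SEdge]

theorem prev_w (h : S.Visits i (.w j)) :
    S.Next i .f (.w j) ∨ S.Next i .f' (.w j) ∨ (∃ k, j = k + 1 ∧ S.Next i (.w k) (.w j)) ∨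
      S.Next i .g (.w j) := by
  have hstep := S.exists_prev_or_enters h
  grind [SEdge]

theorem prev_z (h : S.Visits i .z) : ∃ j, S.Next i (.w j) .z ∨ S.Next i (.w' j) .z := by
  have hstep := S.exists_prev_or_enters h
  grind [SEdge]

theorem prev_y (h : S.Visits i .y) : ∃ j, S.Next i (.w j) .y ∨ S.Next i (.w' j) .y := by
  have hstep := S.exists_prev_or_enters h
  grind [SEdge]

theorem prev_g (h : S.Visits i .g) : S.Next i (.w S.c) .g ∨ S.Next i .v .g := by
  have hstep := S.exists_prev_or_enters h
  grind [SEdge]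

theorem prev_v (h : S.Visits i .v) : S.Next i .h .v := by
  have hstep := S.exists_prev_or_enters h
  grind [SEdge]

theorem prev_h (h : S.Visits i .h) : S.Next i .u .h ∨ S.Next i .d .h := by
  have hstep := S.exists_prev_or_enters h
  grind [SEdge]

theorem leaves_e (h : S.Visits i .e) : S.Leaves i .e := by
  have hstep := S.exists_next_or_leaves h
  grind [SEdge]

theorem enters_d (h : S.Visits i .d) : S.Enters i .d := by
  have hstep := S.exists_prev_or_enters h
  grind [SEdge]

end Steps

theorem visits_x_of_visits_p (hi : i ∉ S.red) (h : S.Visits i (.p j)) : S.Visits i .x := by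
  have hpc : S.Visits i (.p S.c) :=
    forall_between_of_step (Q := fun k => S.Visits i (.p k)) h
      (fun k _ hk hp => by
        obtain ⟨-, hn⟩ | ⟨rfl, -⟩ | hn := next_p hp
        · exact hn.right
        · exact absurd hk (lt_irrefl _)
        · exact absurd hn.right.2 hi) S.c h.1.2 le_rfl
  obtain ⟨hlt, -⟩ | ⟨-, hn⟩ | hn := next_p hpc
  · exact absurd hlt (lt_irrefl _)
  · exact hn.right
  · exact absurd hn.right.2 hi

theorem exists_next_q_p (hb : ¬ S.Visits i .b) (h : S.Visits i (.p j)) :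
    ∃ k, S.Next i (.q k) (.p k) := by
  induction j with
  | zero => exact absurd h.1.1 (by lia)
  | succ j ih =>
    obtain hn | ⟨k, hk, hn⟩ | hn := prev_p h
    · exact absurd hn.left hb
    · obtain rfl := Nat.succ.inj hk
      exact ih hn.left
    · exact ⟨_, hn⟩

theorem exists_l_run (hq : ¬ S.Next i (.l 1) (.q 1)) (h : S.Visits i (.l j)) :
    ∃ k ≤ j, S.Next i (.l k) .f ∧ ∀ m, k ≤ m → m < j → S.Next i (.l (m + 1)) (.l m) := by
  induction j with
  | zero => exact absurd h.1.1 (by lia)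
  | succ j ih =>
    obtain hn | ⟨k, hk, hn⟩ | ⟨hj, hn⟩ := next_l h
    · exact ⟨j + 1, le_rfl, hn, fun m hm hm' => absurd hm' (by lia)⟩
    · obtain rfl := Nat.succ.inj hk
      obtain ⟨k, hk, hf, hrun⟩ := ih hn.right
      refine ⟨k, by lia, hf, fun m hm hm' => ?_⟩
      obtain hlt | rfl := Nat.lt_succ_iff_lt_or_eq.1 hm'
      exacts [hrun m hm hlt, hn]
    · obtain rfl := Nat.succ.inj hj
      exact absurd hn hq

variable (S)

/-- The blue paths through the gadget vertex labelled `s`. -/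
def blueOn (s : SL) : Set I := {i | i ∉ S.red ∧ S.Visits i s}

/-- The blue paths that avoid the gadget vertex labelled `s`. -/
def blueOff (s : SL) : Set I := {i | i ∉ S.red ∧ ¬ S.Visits i s}

/-- The red paths that avoid the gadget vertex labelled `s`. -/
def redOff (s : SL) : Set I := {i | i ∈ S.red ∧ ¬ S.Visits i s}

theorem compl_red : S.redᶜ = S.viaB ∪ S.viaX := by
  have hdisj := Set.disjoint_union_right.2 ⟨S.disjoint_red_viaB, S.disjoint_red_viaX⟩
  exact (IsCompl.of_eq hdisj.inter_eq ((Set.union_assoc ..).symm.trans S.cover)).compl_eq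

variable {S}

theorem mem_blueOn_or_mem_blueOff (hi : i ∉ S.red) (s : SL) : i ∈ S.blueOn s ∨ i ∈ S.blueOff s :=
  (em (S.Visits i s)).imp (⟨hi, ·⟩) (⟨hi, ·⟩)

theorem next_b_q_of_mem_blueOff_x (hi : i ∈ S.blueOff .x) : S.Next i .b (.q 1) := by
  have hB : i ∈ S.viaB := by
    refine (S.compl_red.subset hi.1).resolve_right fun hX => hi.2 ⟨trivial, S.x_mem_path i hX⟩
  obtain hp | hq := next_b ⟨trivial, S.b_mem_path i hB⟩
  · exact absurd (visits_x_of_visits_p hi.1 hp.right) hi.2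
  · exact hq

theorem next_q_of_mem_blueOff_x (hi : i ∈ S.blueOff .x) (h : S.Visits i (.q j)) :
    j < S.c ∧ S.Next i (.q j) (.q (j + 1)) ∨ j = S.c ∧ S.Next i (.q j) .f' := by
  obtain hn | hn | hn := next_q h
  exacts [.inl hn, .inr hn, absurd (visits_x_of_visits_p hi.1 hn.right) hi.2]

theorem visits_q_of_mem_blueOff_x (hi : i ∈ S.blueOff .x) :
    ∀ j, 1 ≤ j → j ≤ S.c → S.Visits i (.q j) :=
  forall_between_of_step (next_b_q_of_mem_blueOff_x hi).right fun _ _ hk hq =>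
    ((next_q_of_mem_blueOff_x hi hq).resolve_right fun h => hk.ne h.1).2.right

theorem visits_f'_of_mem_blueOff_x (hi : i ∈ S.blueOff .x) : S.Visits i .f' :=
  ((next_q_of_mem_blueOff_x hi (visits_q_of_mem_blueOff_x hi S.c S.pos le_rfl)).resolve_left
    fun h => lt_irrefl _ h.1).2.right

variable [Finite I]

section Capacity

theorem mem_of_visits {A : Set I} (hA : ∀ i ∈ A, S.Visits i s) (hcard : S.c ≤ A.ncard)
    (h : S.Visits i s) : i ∈ A := by
  have hle : {i | S.Visits i s}.ncard ≤ S.c :=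
    (Set.ncard_le_ncard fun _ h => h.2).trans (S.ncard_mem_path_le s h.1)
  exact (Set.eq_of_subset_of_ncard_le hA (hle.trans hcard)).superset h

variable (S)

theorem ncard_mem_path_eq {A : Set I} (hs : s.Valid S.c) (hA : ∀ i ∈ A, S.Visits i s)
    (hcard : S.c ≤ A.ncard) : {i | S.ι s ∈ S.path i}.ncard = S.c :=
  (S.ncard_mem_path_le s hs).antisymm (hcard.trans (Set.ncard_le_ncard fun i hi => (hA i hi).2))

theorem ncard_blueOn_le (hs : s.Valid S.c) : (S.blueOn s).ncard ≤ S.c :=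
  (Set.ncard_le_ncard fun _ h => h.2.2).trans (S.ncard_mem_path_le s hs)

theorem ncard_compl_red : S.redᶜ.ncard + 1 = 2 * S.c := by
  rw [S.compl_red, Set.ncard_union_eq S.disjoint_viaB_viaX, S.ncard_viaB, S.ncard_viaX]
  have := S.pos
  lia

theorem ncard_blueOn_add_ncard_blueOff (s : SL) :
    (S.blueOn s).ncard + (S.blueOff s).ncard + 1 = 2 * S.c := by
  rw [← S.ncard_compl_red, ← Set.ncard_inter_add_ncard_sdiff_eq_ncard S.redᶜ {i | S.Visits i s}]
  rfl

theorem row_saturated {row : ℕ → SL} (hrow : ∀ j, (row j).Valid S.c ↔ j ∈ Set.Icc 1 S.c)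
    {A B : Set I} (hAB : Disjoint A B)
    (hA : ∀ i ∈ A, ∀ j, 1 ≤ j → j ≤ S.c → S.Visits i (row j))
    (hB : ∀ i ∈ B, ∃ j, S.Visits i (row j)) (hAcard : S.c ≤ A.ncard + 1) (hBcard : B.ncard = S.c) :
    (∀ j, 1 ≤ j → j ≤ S.c → ∃ i ∈ B, {i | S.Visits i (row j)} = insert i A) ∧
      ∀ i ∈ B, ∀ j k, S.Visits i (row j) → S.Visits i (row k) → j = k := by
  have hsat := saturated_of_ncard_le (T := fun i j => S.Visits i (row j)) (Set.finite_Icc 1 S.c)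
    hAB (fun i hi j hj => hA i hi j hj.1 hj.2)
    (fun i hi => (hB i hi).imp fun j hj => ⟨(hrow j).1 hj.1, hj⟩) (by simp [hBcard])
    fun j hj => (Set.ncard_le_ncard fun i h => h.2).trans
      ((S.ncard_mem_path_le _ ((hrow j).2 hj)).trans hAcard)
  exact ⟨fun j h1 hc => hsat.1 j ⟨h1, hc⟩, fun i hi j k hj hk =>
    hsat.2 i hi j ((hrow j).1 hj.1) k ((hrow k).1 hk.1) hj hk⟩

end Capacity

section RowQ

theorem not_visits_b_of_mem_red (hi : i ∈ S.red) : ¬ S.Visits i .b := fun h =>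
  Set.disjoint_left.1 S.disjoint_red_viaB hi <|
    mem_of_visits (s := .b) (fun i hi => ⟨trivial, S.b_mem_path i hi⟩) S.ncard_viaB.ge h

theorem exists_next_q_p_of_mem_red (hi : i ∈ S.red) : ∃ j, S.Next i (.q j) (.p j) :=
  let ⟨_, hp⟩ := prev_a ⟨trivial, hi⟩
  exists_next_q_p (not_visits_b_of_mem_red hi) hp.left

variable (S) in
theorem q_saturated :
    (∀ j, 1 ≤ j → j ≤ S.c → ∃ i ∈ S.red, {i | S.Visits i (.q j)} = insert i (S.blueOff .x)) ∧
      ∀ i ∈ S.red, ∀ j k, S.Visits i (.q j) → S.Visits i (.q k) → j = k := by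
  refine S.row_saturated (fun _ => Iff.rfl) (Set.disjoint_left.2 fun i hi => hi.1)
    (fun i => visits_q_of_mem_blueOff_x)
    (fun i hi => (exists_next_q_p_of_mem_red hi).imp fun j h => h.left) ?_ S.ncard_red
  have hle := S.ncard_blueOn_le (s := .x) trivial
  have hadd := S.ncard_blueOn_add_ncard_blueOff .x
  lia

variable (S) in
theorem ncard_blueOn_x : (S.blueOn .x).ncard = S.c := by
  obtain ⟨i, hi, heq⟩ := S.q_saturated.1 1 le_rfl S.pos
  have hcap : (insert i (S.blueOff .x)).ncard ≤ S.c := heq ▸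
    (Set.ncard_le_ncard fun _ h => h.2).trans (S.ncard_mem_path_le (.q 1) ⟨le_rfl, S.pos⟩)
  rw [Set.ncard_insert_of_notMem fun h => h.1 hi] at hcap
  have hle := S.ncard_blueOn_le (s := .x) trivial
  have hadd := S.ncard_blueOn_add_ncard_blueOff .x
  lia

theorem not_visits_x_of_mem_red (hi : i ∈ S.red) : ¬ S.Visits i .x := fun h =>
  (mem_of_visits (fun _ hi => hi.2) S.ncard_blueOn_x.ge h).1 hi

theorem not_visits_q_of_mem_blueOn_x (hi : i ∈ S.blueOn .x) : ¬ S.Visits i (.q j) := by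
  intro h
  obtain ⟨i', hi', heq⟩ := S.q_saturated.1 j h.1.1 h.1.2
  obtain rfl | hoff := heq.subset h
  exacts [hi.1 hi', hoff.2 hi.2]

theorem not_visits_f'_of_mem_red (hi : i ∈ S.red) : ¬ S.Visits i .f' := by
  intro h
  obtain ⟨j, hp⟩ := exists_next_q_p_of_mem_red hi
  obtain rfl := S.q_saturated.2 i hi _ _ hp.left (prev_f' h).left
  cases hp.right_unique (prev_f' h)

end RowQ

section RowR

variable (S) in
theorem exists_red_visits_q_one : ∃ i ∈ S.red, S.Visits i (.q 1) := by
  obtain ⟨i, hi, heq⟩ := S.q_saturated.1 1 le_rfl S.pos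
  exact ⟨i, hi, heq.superset (Set.mem_insert ..)⟩

variable (S) in
theorem ncard_redOff_q_one : (S.redOff (.q 1)).ncard + 1 = S.c := by
  obtain ⟨i, hi, heq⟩ := S.q_saturated.1 1 le_rfl S.pos
  have hoff : S.redOff (.q 1) = S.red \ {i} := by
    ext k
    refine and_congr_right fun hk => not_congr ?_
    exact (Set.ext_iff.1 heq k).trans (or_iff_left fun h => h.1 hk)
  rw [hoff, Set.ncard_sdiff_singleton_add_one hi, red, S.ncard_red]

theorem next_r_q_of_mem_redOff (hi : i ∈ S.redOff (.q 1)) : ∃ j, S.Next i (.r 1) (.q j) := by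
  obtain ⟨j, hp⟩ := exists_next_q_p_of_mem_red hi.1
  obtain hn | ⟨k, rfl, hn⟩ | ⟨rfl, -⟩ | ⟨-, hn⟩ := prev_q hp.left
  · exact absurd hn.left (not_visits_b_of_mem_red hi.1)
  · exact absurd (S.q_saturated.2 i hi.1 _ _ hn.left hn.right) (by lia)
  · exact absurd hp.left hi.2
  · exact ⟨j, hn⟩

theorem prev_r_of_mem_red (hi : i ∈ S.red) (h : S.Visits i (.r j)) :
    j < S.c ∧ S.Next i (.r (j + 1)) (.r j) ∨ j = S.c ∧ S.Next i .z (.r j) :=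
  (prev_r h).resolve_left fun hx => not_visits_x_of_mem_red hi hx.left

theorem visits_r_of_mem_redOff (hi : i ∈ S.redOff (.q 1)) :
    ∀ j, 1 ≤ j → j ≤ S.c → S.Visits i (.r j) :=
  forall_between_of_step (next_r_q_of_mem_redOff hi).choose_spec.left fun _ _ hk hr =>
    ((prev_r_of_mem_red hi.1 hr).resolve_right fun h => hk.ne h.1).2.left

theorem visits_z_of_mem_redOff (hi : i ∈ S.redOff (.q 1)) : S.Visits i .z :=
  ((prev_r_of_mem_red hi.1 (visits_r_of_mem_redOff hi S.c S.pos le_rfl)).resolve_left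
    fun h => lt_irrefl _ h.1).2.left

variable (S) in
theorem r_saturated :
    (∀ j, 1 ≤ j → j ≤ S.c → ∃ i ∈ S.blueOn .x, {i | S.Visits i (.r j)} =
      insert i (S.redOff (.q 1))) ∧
      ∀ i ∈ S.blueOn .x, ∀ j k, S.Visits i (.r j) → S.Visits i (.r k) → j = k :=
  S.row_saturated (fun _ => Iff.rfl) (Set.disjoint_left.2 fun _ hi h => h.1 hi.1)
    (fun _ => visits_r_of_mem_redOff) (fun _ hi => (next_x hi.2).imp fun _ h => h.right)
    S.ncard_redOff_q_one.ge S.ncard_blueOn_x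

theorem mem_of_visits_r (h : S.Visits i (.r j)) : i ∈ S.blueOn .x ∨ i ∈ S.redOff (.q 1) := by
  obtain ⟨i', hi', heq⟩ := S.r_saturated.1 j h.1.1 h.1.2
  obtain rfl | hoff := heq.subset h
  exacts [.inl hi', .inr hoff]

theorem mem_red_of_visits_z (h : S.Visits i .z) : i ∈ S.red := by
  have hz := next_z h
  obtain hi | hi := mem_of_visits_r hz.right
  · obtain ⟨j, hx⟩ := next_x hi.2
    obtain rfl := S.r_saturated.2 i hi _ _ hx.right hz.right
    cases hx.left_unique hz
  · exact hi.1

theorem exists_next_r_l_of_mem_blueOn_x (hi : i ∈ S.blueOn .x) :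
    ∃ j, S.Next i (.r j) (.l j) := by
  obtain ⟨j, hx⟩ := next_x hi.2
  obtain hn | ⟨k, rfl, hn⟩ | ⟨k, hn⟩ := next_r hx.right
  · exact ⟨j, hn⟩
  · exact absurd (S.r_saturated.2 i hi _ _ hn.left hn.right) (by lia)
  · exact absurd hn.right (not_visits_q_of_mem_blueOn_x hi)

end RowR

section RowL

theorem not_next_l_q_of_notMem_red (hi : i ∉ S.red) : ¬ S.Next i (.l 1) (.q 1) := by
  intro h
  obtain hx | hx := mem_blueOn_or_mem_blueOff hi .x
  · exact not_visits_q_of_mem_blueOn_x hx h.right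
  · cases h.left_unique (next_b_q_of_mem_blueOff_x hx)

theorem visits_f_of_mem_blueOn_x (hi : i ∈ S.blueOn .x) : S.Visits i .f :=
  let ⟨_, hr⟩ := exists_next_r_l_of_mem_blueOn_x hi
  let ⟨_, _, hf, _⟩ := exists_l_run (not_next_l_q_of_notMem_red hi.1) hr.right
  hf.right

theorem mem_blueOn_x_of_visits_f (h : S.Visits i .f) : i ∈ S.blueOn .x :=
  mem_of_visits (fun _ => visits_f_of_mem_blueOn_x) S.ncard_blueOn_x.ge h

theorem leaves_y_of_notMem_red (hi : i ∉ S.red) (h : S.Visits i .y) : S.Leaves i .y := by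
  -- A blue path stepping from `y` to `ℓ_c` would run down the row `ℓ` to `f`, and so would also
  -- enter this row from the row `r`; both runs end at the same exit, so they would have to merge.
  refine (next_y h).resolve_left fun hy => ?_
  have hq := not_next_l_q_of_notMem_red hi
  obtain ⟨k, -, hf, hrun⟩ := exists_l_run hq hy.right
  obtain ⟨j, hr⟩ := exists_next_r_l_of_mem_blueOn_x (mem_blueOn_x_of_visits_f hf.right)
  obtain ⟨k', hkj, hf', -⟩ := exists_l_run hq hr.right
  cases hf.left_unique hf'
  obtain hlt | rfl := hr.right.1.2.lt_or_eq
  · cases hr.left_unique (hrun j hkj hlt)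
  · cases hr.left_unique hy

theorem prev_l_of_visits_q_one (hi : i ∈ S.red) (hq : S.Visits i (.q 1)) (h : S.Visits i (.l j)) :
    j < S.c ∧ S.Next i (.l (j + 1)) (.l j) ∨ j = S.c ∧ S.Next i .y (.l j) :=
  (prev_l h).resolve_left fun hr => (mem_of_visits_r hr.left).elim (·.1 hi) (·.2 hq)

theorem visits_y_of_visits_q_one (hi : i ∈ S.red) (hq : S.Visits i (.q 1)) : S.Visits i .y := by
  have hl : S.Visits i (.l 1) := by
    obtain hn | ⟨k, hk, hn⟩ | ⟨-, hn⟩ | ⟨hne, -⟩ := prev_q hq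
    · exact absurd hn.left (not_visits_b_of_mem_red hi)
    · exact absurd hn.left.1.1 (by lia)
    · exact hn.left
    · exact absurd rfl hne
  have hrow := forall_between_of_step (Q := fun j => S.Visits i (.l j)) hl fun _ _ hk hl =>
    ((prev_l_of_visits_q_one hi hq hl).resolve_right fun h => hk.ne h.1).2.left
  exact ((prev_l_of_visits_q_one hi hq (hrow S.c S.pos le_rfl)).resolve_left
    fun h => lt_irrefl _ h.1).2.left

end RowL

section RowW

theorem visits_w_one_or_w'_one (hi : i ∉ S.red) : S.Visits i (.w 1) ∨ S.Visits i (.w' 1) := by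
  obtain hx | hx := mem_blueOn_or_mem_blueOff hi .x
  · exact (next_f (visits_f_of_mem_blueOn_x hx)).imp Next.right Next.right
  · exact (next_f' (visits_f'_of_mem_blueOff_x hx)).imp Next.right Next.right

variable (S) in
theorem ncard_blueOn_w_or_w' :
    (S.blueOn (.w 1)).ncard = S.c ∨ (S.blueOn (.w' 1)).ncard = S.c := by
  have hsub : S.redᶜ ⊆ S.blueOn (.w 1) ∪ S.blueOn (.w' 1) := fun i hi =>
    (visits_w_one_or_w'_one hi).imp (⟨hi, ·⟩) (⟨hi, ·⟩)
  have hunion := (Set.ncard_le_ncard hsub).trans (Set.ncard_union_le ..)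
  have hw := S.ncard_blueOn_le (s := .w 1) ⟨le_rfl, S.pos⟩
  have hw' := S.ncard_blueOn_le (s := .w' 1) ⟨le_rfl, S.pos⟩
  have hblue := S.ncard_compl_red
  lia

theorem next_w_of_notMem_red (hi : i ∉ S.red) (h : S.Visits i (.w j)) (hj : j < S.c) :
    S.Next i (.w j) (.w (j + 1)) := by
  obtain ⟨-, hn⟩ | ⟨hjc, -⟩ | hn | ⟨hjc, -⟩ := next_w h
  exacts [hn, absurd hjc hj.ne, absurd (mem_red_of_visits_z hn.right) hi, absurd hjc hj.ne]

theorem visits_w_of_mem_blueOn (hi : i ∈ S.blueOn (.w 1)) :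
    ∀ j, 1 ≤ j → j ≤ S.c → S.Visits i (.w j) :=
  forall_between_of_step hi.2 fun _ _ hk hw => (next_w_of_notMem_red hi.1 hw hk).right

theorem exists_next_w_of_mem_red (hi : i ∈ S.red) :
    ∃ t j, (t = .z ∨ t = .y) ∧ (S.Next i (.w j) t ∨ S.Next i (.w' j) t) := by
  by_cases hq : S.Visits i (.q 1)
  · exact ⟨.y, (prev_y (visits_y_of_visits_q_one hi hq)).imp fun _ h => ⟨.inr rfl, h⟩⟩
  · exact ⟨.z, (prev_z (visits_z_of_mem_redOff ⟨hi, hq⟩)).imp fun _ h => ⟨.inl rfl, h⟩⟩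

end RowW

section Switched

theorem visits_w'_of_mem_blueOn (hi : i ∈ S.blueOn (.w' 1)) :
    ∀ j, 1 ≤ j → j ≤ S.c → S.Visits i (.w' j) :=
  visits_w_of_mem_blueOn (S := S.swap) hi

theorem mem_blueOn_of_visits_w' (hW : (S.blueOn (.w' 1)).ncard = S.c) (h : S.Visits i (.w' j)) :
    i ∈ S.blueOn (.w' 1) :=
  mem_of_visits (fun _ hi => visits_w'_of_mem_blueOn hi j h.1.1 h.1.2) hW.ge h

theorem ncard_blueOff_w' (hW : (S.blueOn (.w' 1)).ncard = S.c) :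
    (S.blueOff (.w' 1)).ncard + 1 = S.c := by
  have hadd := S.ncard_blueOn_add_ncard_blueOff (.w' 1)
  lia

theorem visits_w_of_mem_blueOff (hi : i ∈ S.blueOff (.w' 1)) :
    ∀ j, 1 ≤ j → j ≤ S.c → S.Visits i (.w j) :=
  visits_w_of_mem_blueOn ⟨hi.1, (visits_w_one_or_w'_one hi.1).resolve_right hi.2⟩

theorem exists_next_w_zy_of_mem_red (hW : (S.blueOn (.w' 1)).ncard = S.c) (hi : i ∈ S.red) :
    ∃ t j, (t = .z ∨ t = .y) ∧ S.Next i (.w j) t := by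
  obtain ⟨t, j, ht, hn⟩ := exists_next_w_of_mem_red hi
  exact ⟨t, j, ht, hn.resolve_right fun h => (mem_blueOn_of_visits_w' hW h.left).1 hi⟩

theorem w_saturated (hW : (S.blueOn (.w' 1)).ncard = S.c) :
    (∀ j, 1 ≤ j → j ≤ S.c → ∃ i ∈ S.red, {i | S.Visits i (.w j)} =
      insert i (S.blueOff (.w' 1))) ∧
      ∀ i ∈ S.red, ∀ j k, S.Visits i (.w j) → S.Visits i (.w k) → j = k :=
  S.row_saturated (fun _ => Iff.rfl) (Set.disjoint_left.2 fun _ hi => hi.1)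
    (fun _ => visits_w_of_mem_blueOff)
    (fun _ hi => let ⟨_, j, _, hn⟩ := exists_next_w_zy_of_mem_red hW hi; ⟨j, hn.left⟩)
    (ncard_blueOff_w' hW).ge S.ncard_red

theorem not_visits_w_of_mem_blueOn (hW : (S.blueOn (.w' 1)).ncard = S.c)
    (hi : i ∈ S.blueOn (.w' 1)) : ¬ S.Visits i (.w j) := by
  intro h
  obtain ⟨i', hi', heq⟩ := (w_saturated hW).1 j h.1.1 h.1.2
  obtain rfl | hoff := heq.subset h
  exacts [hi.1 hi', hoff.2 hi.2]

theorem next_v_g_of_mem_red (hW : (S.blueOn (.w' 1)).ncard = S.c) (hi : i ∈ S.red) :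
    S.Next i .v .g := by
  obtain ⟨t, j, ht, hn⟩ := exists_next_w_zy_of_mem_red hW hi
  have hg : S.Visits i .g := by
    obtain hp | hp | ⟨k, rfl, hp⟩ | hp := prev_w hn.left
    · exact absurd hi (mem_blueOn_x_of_visits_f hp.left).1
    · exact absurd hp.left (not_visits_f'_of_mem_red hi)
    · exact absurd ((w_saturated hW).2 i hi _ _ hp.left hp.right) (by lia)
    · exact hp.left
  refine (prev_g hg).resolve_left fun hw => ?_
  obtain rfl := (w_saturated hW).2 i hi _ _ hw.left hn.left
  cases hw.right_unique hn
  simp at ht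

theorem visits_h_of_mem_red (hW : (S.blueOn (.w' 1)).ncard = S.c) (hi : i ∈ S.red) :
    S.Visits i .h :=
  (prev_v (next_v_g_of_mem_red hW hi).left).left

theorem visits_y_of_mem_blueOff (hW : (S.blueOn (.w' 1)).ncard = S.c)
    (hi : i ∈ S.blueOff (.w' 1)) : S.Visits i .y := by
  obtain ⟨hlt, -⟩ | ⟨-, hn⟩ | hn | ⟨-, hn⟩ :=
    next_w (visits_w_of_mem_blueOff hi S.c S.pos le_rfl)
  · exact absurd hlt (lt_irrefl _)
  · exact absurd (mem_of_visits (fun _ hi => (next_v_g_of_mem_red hW hi).right) S.ncard_red.ge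
      hn.right) hi.1
  · exact absurd (mem_red_of_visits_z hn.right) hi.1
  · exact hn.right

theorem exists_y_saturated (hW : (S.blueOn (.w' 1)).ncard = S.c) :
    ∃ i ∈ S.red, (insert i (S.blueOff (.w' 1))).ncard = S.c ∧
      ∀ k ∈ insert i (S.blueOff (.w' 1)), S.Visits k .y := by
  obtain ⟨i, hi, hq⟩ := S.exists_red_visits_q_one
  refine ⟨i, hi, ?_, ?_⟩
  · rw [Set.ncard_insert_of_notMem fun h => h.1 hi, ncard_blueOff_w' hW]
  · rintro k (rfl | hk)
    exacts [visits_y_of_visits_q_one hi hq, visits_y_of_mem_blueOff hW hk]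

theorem mem_blueOff_of_visits_y (hW : (S.blueOn (.w' 1)).ncard = S.c) (hi : i ∉ S.red)
    (h : S.Visits i .y) : i ∈ S.blueOff (.w' 1) := by
  obtain ⟨i', hi', hcard, hy⟩ := exists_y_saturated hW
  obtain rfl | hoff := mem_of_visits hy hcard.ge h
  exacts [absurd hi' hi, hoff]

theorem not_next_g'_w'_of_mem_blueOn (hW : (S.blueOn (.w' 1)).ncard = S.c)
    (hi : i ∈ S.blueOn (.w' 1)) : ¬ S.Next i .g' (.w' j) := by
  intro hg
  obtain rfl | hj := hg.right.1.1.eq_or_lt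
  · have hw : ¬ S.Visits i (.w 1) := not_visits_w_of_mem_blueOn hW hi
    obtain hx | hx := mem_blueOn_or_mem_blueOff hi.1 .x
    · cases hg.left_unique
        ((next_f (visits_f_of_mem_blueOn_x hx)).resolve_left fun h => hw h.right)
    · cases hg.left_unique
        ((next_f' (visits_f'_of_mem_blueOff_x hx)).resolve_left fun h => hw h.right)
  · obtain ⟨k, rfl⟩ := Nat.exists_eq_add_of_lt hj
    have hk : S.Visits i (.w' (1 + k)) :=
      visits_w'_of_mem_blueOn hi _ (by lia) (Nat.le_of_succ_le hg.right.1.2)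
    have hn : S.Next i (.w' (1 + k)) (.w' (1 + k + 1)) :=
      next_w_of_notMem_red (S := S.swap) hi.1 hk hg.right.1.2
    cases hg.left_unique hn

theorem visits_u_of_mem_blueOn (hW : (S.blueOn (.w' 1)).ncard = S.c)
    (hi : i ∈ S.blueOn (.w' 1)) : S.Visits i .u := by
  have hg : S.Visits i .g' := by
    obtain ⟨hlt, -⟩ | ⟨-, hn⟩ | hn | ⟨-, hn⟩ :=
      next_w (S := S.swap) (visits_w'_of_mem_blueOn hi S.c S.pos le_rfl)
    · exact absurd hlt (lt_irrefl _)
    · exact hn.right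
    · exact absurd (mem_red_of_visits_z (S := S.swap) hn.right) hi.1
    · exact absurd hi.2 (mem_blueOff_of_visits_y hW hi.1 hn.right).2
  exact ((next_g (S := S.swap) hg).resolve_left fun ⟨_, hw⟩ =>
    not_next_g'_w'_of_mem_blueOn hW hi hw).right

theorem visits_d_of_mem_red (hW : (S.blueOn (.w' 1)).ncard = S.c) (hi : i ∈ S.red) :
    S.Visits i .d :=
  ((prev_h (visits_h_of_mem_red hW hi)).resolve_left fun hu =>
    (mem_of_visits (fun _ => visits_u_of_mem_blueOn hW) hW.ge hu.left).1 hi).left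

theorem visits_e_of_mem_blueOn (hW : (S.blueOn (.w' 1)).ncard = S.c)
    (hi : i ∈ S.blueOn (.w' 1)) : S.Visits i .e :=
  ((next_u (visits_u_of_mem_blueOn hW hi)).resolve_left fun hh =>
    hi.1 (mem_of_visits (fun _ => visits_h_of_mem_red hW) S.ncard_red.ge hh.right)).right

theorem setOf_leaves_y_eq_blueOff (hW : (S.blueOn (.w' 1)).ncard = S.c) :
    {i | i ∈ S.redᶜ ∧ S.Leaves i .y} = S.blueOff (.w' 1) :=
  Set.Subset.antisymm (fun _ h => mem_blueOff_of_visits_y hW h.1 (h.2.visits trivial))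
    fun _ hi => ⟨hi.1, leaves_y_of_notMem_red hi.1 (visits_y_of_mem_blueOff hW hi)⟩

theorem setOf_leaves_e_eq_blueOn (hW : (S.blueOn (.w' 1)).ncard = S.c) :
    {i | i ∈ S.redᶜ ∧ S.Leaves i .e} = S.blueOn (.w' 1) :=
  Set.Subset.antisymm
    (fun _ h => mem_of_visits (fun _ => visits_e_of_mem_blueOn hW) hW.ge (h.2.visits trivial))
    fun _ hi => ⟨hi.1, leaves_e (visits_e_of_mem_blueOn hW hi)⟩

theorem switched_of_ncard_blueOn_w' (hW : (S.blueOn (.w' 1)).ncard = S.c) :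
    (∀ i ∈ S.red, S.ι .d ∈ S.path i ∧ S.Enters i .d) ∧
      {i | i ∈ S.redᶜ ∧ S.Leaves i .y}.ncard = S.c - 1 ∧
      {i | i ∈ S.redᶜ ∧ S.Leaves i .e}.ncard = S.c ∧
      {i | S.ι .y ∈ S.path i}.ncard = S.c ∧
      {i | S.ι .g ∈ S.path i}.ncard = S.c ∧ {i | S.ι .h ∈ S.path i}.ncard = S.c := by
  refine ⟨fun i hi => ?_, ?_, ?_, ?_, ?_, ?_⟩
  · have hd := visits_d_of_mem_red hW hi
    exact ⟨hd.2, enters_d hd⟩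
  · rw [setOf_leaves_y_eq_blueOff hW, ← ncard_blueOff_w' hW, Nat.add_sub_cancel]
  · rw [setOf_leaves_e_eq_blueOn hW, hW]
  · obtain ⟨i, -, hcard, hy⟩ := exists_y_saturated hW
    exact S.ncard_mem_path_eq trivial hy hcard.ge
  · exact S.ncard_mem_path_eq trivial (fun _ hi => (next_v_g_of_mem_red hW hi).right) S.ncard_red.ge
  · exact S.ncard_mem_path_eq trivial (fun _ => visits_h_of_mem_red hW) S.ncard_red.ge

end Switched

end SwitchRouting

theorem stmt11_general {V I : Type*} [Finite I] (S : SwitchRouting V I) :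
    (∀ i ∈ S.red, S.ι .d ∈ S.path i ∧ S.Enters i .d) ∧
      {i | i ∈ S.viaB ∪ S.viaX ∧ S.Leaves i .y}.ncard = S.c - 1 ∧
      {i | i ∈ S.viaB ∪ S.viaX ∧ S.Leaves i .e}.ncard = S.c ∧
      ({i | S.ι .x ∈ S.path i}.ncard = S.c ∧ {i | S.ι .y ∈ S.path i}.ncard = S.c) ∧
      ({i | S.ι .g ∈ S.path i}.ncard = S.c ∧ {i | S.ι .h ∈ S.path i}.ncard = S.c ∨
        {i | S.ι .g' ∈ S.path i}.ncard = S.c ∧ {i | S.ι .h' ∈ S.path i}.ncard = S.c) := by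
  have hx := S.ncard_mem_path_eq (s := .x) trivial (fun _ hi => hi.2) S.ncard_blueOn_x.ge
  rw [← S.compl_red]
  obtain hw | hw := S.ncard_blueOn_w_or_w'
  · obtain ⟨hd, hly, hle, hy, hgh⟩ := SwitchRouting.switched_of_ncard_blueOn_w' (S := S.swap) hw
    exact ⟨hd, hly, hle, ⟨hx, hy⟩, .inr hgh⟩
  · obtain ⟨hd, hly, hle, hy, hgh⟩ := SwitchRouting.switched_of_ncard_blueOn_w' hw
    exact ⟨hd, hly, hle, ⟨hx, hy⟩, .inl hgh⟩

/-- **the switch gadget works.** -/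
theorem stmt11 {V : Type*} (c : ℕ) (hc : 2 ≤ c) (G : Dgraph V)
    (ι : SL → V) (Gad : Set V)
    (hGadDef : Gad = ι '' {l : SL | SL.Valid c l})
    (hinj : Set.InjOn ι {l : SL | SL.Valid c l})
    (hmem : ∀ l : SL, SL.Valid c l → ι l ∈ G.verts)
    -- the edges of `G` between two gadget vertices are exactly those of `S(c)`
    (hedge_iff : ∀ l l' : SL, SL.Valid c l → SL.Valid c l' →
      (G.Edge (ι l) (ι l') ↔ SEdge c l l'))
    -- every edge of `G` between a gadget vertex and a non-gadget vertex enters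
    -- at `b, x, d, u, u'` or leaves at `a, e, y, v, v'`
    (hboundary : ∀ z w : V, G.Edge z w →
      ((z ∈ Gad ∧ w ∉ Gad) ∨ (z ∉ Gad ∧ w ∈ Gad)) →
      (w ∈ ({ι SL.b, ι SL.x, ι SL.d, ι SL.u, ι SL.u'} : Set V) ∧ z ∉ Gad) ∨
      (z ∈ ({ι SL.a, ι SL.e, ι SL.y, ι SL.v, ι SL.v'} : Set V) ∧ w ∉ Gad))
    (P : Fin (3 * c - 1) → List V)
    (hPdist : Function.Injective P)
    (hPpath : ∀ idx, G.IsPath (P idx))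
    -- every vertex of `G` lies on at most `c` of the paths
    (hcong : ∀ z ∈ G.verts, {idx | z ∈ P idx}.ncard ≤ c)
    -- no path starts or ends in the gadget
    (hends : ∀ idx z, ((P idx).head? = some z ∨ (P idx).getLast? = some z) →
      z ∉ Gad)
    (R Bb Bx : Set (Fin (3 * c - 1)))
    -- exactly `c` paths (the red ones) contain the vertex `a`
    (hRdef : R = {idx | ι SL.a ∈ P idx})
    (hRcard : R.ncard = c)
    -- `c` other paths enter at `b`, and the remaining `c − 1` paths enter at `x`
    (hBbcard : Bb.ncard = c) (hBxcard : Bx.ncard = c - 1)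
    (hRBb : Disjoint R Bb) (hRBx : Disjoint R Bx) (hBbBx : Disjoint Bb Bx)
    (hcover : R ∪ Bb ∪ Bx = Set.univ)
    (hBb : ∀ idx ∈ Bb, ∃ n z, (P idx)[n]? = some z ∧
      (P idx)[n + 1]? = some (ι SL.b))
    (hBx : ∀ idx ∈ Bx, ∃ n z, (P idx)[n]? = some z ∧
      (P idx)[n + 1]? = some (ι SL.x)) :
    -- (1) the red paths enter the gadget at `d`
    (∀ idx ∈ R, ι SL.d ∈ P idx ∧
      ∃ n z, (P idx)[n]? = some z ∧ (P idx)[n + 1]? = some (ι SL.d) ∧ z ∉ Gad) ∧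
    -- (2) exactly `c − 1` blue paths leave at `y` and exactly `c` leave at `e`
    ({idx | idx ∈ Bb ∪ Bx ∧ ∃ n z, (P idx)[n]? = some (ι SL.y) ∧
      (P idx)[n + 1]? = some z ∧ z ∉ Gad}.ncard = c - 1) ∧
    ({idx | idx ∈ Bb ∪ Bx ∧ ∃ n z, (P idx)[n]? = some (ι SL.e) ∧
      (P idx)[n + 1]? = some z ∧ z ∉ Gad}.ncard = c) ∧
    -- (3) `x` and `y` each lie on exactly `c` of the paths
    ({idx | ι SL.x ∈ P idx}.ncard = c ∧ {idx | ι SL.y ∈ P idx}.ncard = c) ∧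
    -- (4) either `g` and `h`, or `g'` and `h'`, each lie on exactly `c` paths
    (({idx | ι SL.g ∈ P idx}.ncard = c ∧ {idx | ι SL.h ∈ P idx}.ncard = c) ∨
     ({idx | ι SL.g' ∈ P idx}.ncard = c ∧
      {idx | ι SL.h' ∈ P idx}.ncard = c)) := by
  subst hRdef
  exact stmt11_general
    { c := c, pos := by lia, G := G, ι := ι, gadget := Gad, gadget_eq := hGadDef, injOn := hinj
      sEdge_of_edge := fun s t hs ht => (hedge_iff s t hs ht).1
      boundary := hboundary, path := P, isPath := hPpath
      ncard_mem_path_le := fun s hs => hcong _ (hmem s hs)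
      ends_notMem := hends, viaB := Bb, viaX := Bx
      ncard_red := hRcard, ncard_viaB := hBbcard, ncard_viaX := hBxcard
      disjoint_red_viaB := hRBb, disjoint_red_viaX := hRBx, disjoint_viaB_viaX := hBbBx
      cover := hcover
      b_mem_path := fun i hi => let ⟨_, _, _, hb⟩ := hBb i hi; List.mem_of_getElem? hb
      x_mem_path := fun i hi => let ⟨_, _, _, hx⟩ := hBx i hi; List.mem_of_getElem? hx }
end

section
/- Let c ≥ 2 and let G be the digraph with pairwise distinct vertices s1, s2, s3, t1, t1', t2, t3 and u_1, …, u_c, v_1, …, v_c, whose edge set consists exactly of: u_i→u_{i+1} and v_i→v_{i+1} for 1 ≤ i ≤ c−1; s2→u_1, s2→v_1, s3→u_1, s3→v_1; u_c→t2, v_c→t2, u_c→t3, v_c→t3; and s1→u_i, s1→v_i, u_i→t1, v_i→t1' for 1 ≤ i ≤ c. Then there is no family of 3c−1 directed paths P_1, …, P_{3c−1} in G such that every vertex of G lies on at most c of the paths, each of P_1, …, P_{2c−1} starts at s2 or s3 and ends at t2 or t3, each of P_{2c}, …, P_{3c−1} starts at s1 and ends at t1 or t1', and among P_{2c}, …,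 P_{3c−1} at least one path ends at t1 and at least one path ends at t1'. -/
/-!
Every path from `{s2, s3}` to `{t2, t3}` enters the first vertex of one of the two rails `u`, `v`
and cannot leave that rail before its end, because the only other exits lead to the sinks `t1` and
`t1'`. A path from `s1` to `t1` meets the rail `u` in some `u i`, and a path from `s1` to `t1'`
meets `v` in some `v j`. So each of the `2c - 1` long paths uses `u i` or `v j`, each of which has
room for at most `c - 1` of them.
-/

theorem ncard_add_two_le_of_subset_union {ι : Type*} {A X Y : Set ι} {a b : ι}
    (hX : X.Finite) (hY : Y.Finite) (hA : A ⊆ X ∪ Y)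
    (haX : a ∈ X) (haA : a ∉ A) (hbY : b ∈ Y) (hbA : b ∉ A) :
    A.ncard + 2 ≤ X.ncard + Y.ncard := by
  have ncard_inter_lt {Z : Set ι} {d : ι} (hZ : Z.Finite) (hdZ : d ∈ Z) (hdA : d ∉ A) :
      (A ∩ Z).ncard < Z.ncard :=
    Set.ncard_lt_ncard ⟨Set.inter_subset_right, fun h => hdA (h hdZ).1⟩ hZ
  have hcover : A.ncard ≤ (A ∩ X).ncard + (A ∩ Y).ncard := by
    calc A.ncard = (A ∩ X ∪ A ∩ Y).ncard := by
          rw [← Set.inter_union_distrib_left, Set.inter_eq_left.mpr hA]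
      _ ≤ _ := Set.ncard_union_le _ _
  have hltX := ncard_inter_lt hX haX haA
  have hltY := ncard_inter_lt hY hbY hbA
  omega

section Chains

variable {V : Type*} {R : V → V → Prop} {p : List V}

theorem exists_rel_of_isChain_of_ne_getLast {x t : V} (hp : p.IsChain R) (hx : x ∈ p)
    (ht : p.getLast? = some t) (hxt : x ≠ t) : ∃ y ∈ p, R x y := by
  obtain ⟨l₁, l₂, rfl⟩ := List.append_of_mem hx
  cases l₂ with
  | nil => exact absurd (by simpa using ht) hxt
  | cons y l₂ => exact ⟨y, by simp, (List.isChain_append_cons_cons.mp hp).2.1⟩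

theorem exists_rel_of_isChain_of_ne_head {x s : V} (hp : p.IsChain R) (hx : x ∈ p)
    (hs : p.head? = some s) (hxs : x ≠ s) : ∃ y ∈ p, R y x := by
  simpa [flip] using exists_rel_of_isChain_of_ne_getLast (p := p.reverse) (R := flip R)
    (List.isChain_reverse.mpr hp) (by simpa using hx) (by simpa using hs) hxs

theorem mem_of_isChain_of_forced_step {r : ℕ → V} {m n : ℕ} {t : V} (hp : p.IsChain R)
    (ht : p.getLast? = some t) (hm : r m ∈ p) (hne : ∀ i ∈ Set.Ico m n, r i ≠ t)
    (hstep : ∀ i ∈ Set.Ico m n, ∀ y ∈ p, R (r i) y → y = r (i + 1)) {i : ℕ}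
    (hi : i ∈ Set.Icc m n) : r i ∈ p := by
  obtain ⟨hmi, hin⟩ := hi
  induction i, hmi using Nat.le_induction with
  | base => exact hm
  | succ k hmk ih =>
    have hk : k ∈ Set.Ico m n := ⟨hmk, hin⟩
    obtain ⟨y, hy, hky⟩ :=
      exists_rel_of_isChain_of_ne_getLast hp (ih (Nat.le_of_succ_le hin)) ht (hne k hk)
    exact hstep k hk y hy hky ▸ hy

end Chains

namespace Dgraph

variable {V : Type*}

/-- `G` is the digraph formed by two rails, the directed paths `u 1, …, u c` and `v 1, …, v c`,
entered at their first vertices from `s2`, `s3` and at every vertex from `s1`, and left at their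
last vertices towards `t2`, `t3` and at every vertex towards `t1` (from `u`) or `t1'` (from `v`).
Only the values of `u` and `v` on `Set.Icc 1 c` matter. -/
structure IsTwoRail (G : Dgraph V) (c : ℕ) (s1 s2 s3 t1 t1' t2 t3 : V) (u v : ℕ → V) :
    Prop where
  pos : 0 < c
  terminals_pairwise_ne : List.Pairwise (· ≠ ·) [s1, s2, s3, t1, t1', t2, t3]
  injOn_u : Set.InjOn u (Set.Icc 1 c)
  injOn_v : Set.InjOn v (Set.Icc 1 c)
  u_ne_v : ∀ i ∈ Set.Icc 1 c, ∀ j ∈ Set.Icc 1 c, u i ≠ v j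
  u_notMem_terminals : ∀ i ∈ Set.Icc 1 c, u i ∉ ({s1, s2, s3, t1, t1', t2, t3} : Set V)
  v_notMem_terminals : ∀ i ∈ Set.Icc 1 c, v i ∉ ({s1, s2, s3, t1, t1', t2, t3} : Set V)
  verts_eq : G.verts = ({s1, s2, s3, t1, t1', t2, t3} : Set V) ∪
    u '' Set.Icc 1 c ∪ v '' Set.Icc 1 c
  edge_iff : ∀ z w : V, G.Edge z w ↔
    ((∃ i, 1 ≤ i ∧ i + 1 ≤ c ∧
        ((z = u i ∧ w = u (i + 1)) ∨ (z = v i ∧ w = v (i + 1)))) ∨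
     ((z = s2 ∨ z = s3) ∧ (w = u 1 ∨ w = v 1)) ∨
     ((z = u c ∨ z = v c) ∧ (w = t2 ∨ w = t3)) ∨
     (∃ i, 1 ≤ i ∧ i ≤ c ∧
        ((z = s1 ∧ (w = u i ∨ w = v i)) ∨ (z = u i ∧ w = t1) ∨
         (z = v i ∧ w = t1'))))

namespace IsTwoRail

variable {G : Dgraph V} {c : ℕ} {s1 s2 s3 t1 t1' t2 t3 : V} {u v : ℕ → V}

theorem swap (h : G.IsTwoRail c s1 s2 s3 t1 t1' t2 t3 u v) :
    G.IsTwoRail c s1 s2 s3 t1' t1 t2 t3 v u where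
  pos := h.pos
  terminals_pairwise_ne := by have := h.terminals_pairwise_ne; grind
  injOn_u := h.injOn_v
  injOn_v := h.injOn_u
  u_ne_v i hi j hj := (h.u_ne_v j hj i hi).symm
  u_notMem_terminals := by have := h.v_notMem_terminals; grind
  v_notMem_terminals := by have := h.u_notMem_terminals; grind
  verts_eq := by rw [h.verts_eq]; grind
  edge_iff z w := by rw [h.edge_iff]; grind

theorem eq_of_edge_u (h : G.IsTwoRail c s1 s2 s3 t1 t1' t2 t3 u v)
    {i : ℕ} (hi : i ∈ Set.Ico 1 c) {w : V} (hw : G.Edge (u i) w) :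
    w = u (i + 1) ∨ w = t1 := by
  have hu := h.u_notMem_terminals
  have huv := h.u_ne_v
  have hinj := h.injOn_u
  rw [h.edge_iff] at hw
  grind [Set.InjOn]

theorem not_edge_t1 (h : G.IsTwoRail c s1 s2 s3 t1 t1' t2 t3 u v)
    {w : V} : ¬ G.Edge t1 w := by
  have hu := h.u_notMem_terminals
  have hv := h.v_notMem_terminals
  have hne := h.terminals_pairwise_ne
  have hc := h.pos
  rw [h.edge_iff]
  grind

theorem eq_of_edge_s2_or_s3 (h : G.IsTwoRail c s1 s2 s3 t1 t1' t2 t3 u v)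
    {s w : V} (hs : s = s2 ∨ s = s3) (hw : G.Edge s w) :
    w = u 1 ∨ w = v 1 := by
  have hu := h.u_notMem_terminals
  have hv := h.v_notMem_terminals
  have hne := h.terminals_pairwise_ne
  have hc := h.pos
  rw [h.edge_iff] at hw
  grind

theorem exists_eq_u_of_edge_t1 (h : G.IsTwoRail c s1 s2 s3 t1 t1' t2 t3 u v)
    {w : V} (hw : G.Edge w t1) : ∃ i ∈ Set.Icc 1 c, w = u i := by
  have hu := h.u_notMem_terminals
  have hv := h.v_notMem_terminals
  have hne := h.terminals_pairwise_ne
  have hc := h.pos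
  rw [h.edge_iff] at hw
  grind

theorem u_mem_of_u_one_mem (h : G.IsTwoRail c s1 s2 s3 t1 t1' t2 t3 u v)
    {p : List V} {s t : V} (hp : G.PathFrom p s t)
    (ht : t = t2 ∨ t = t3) (hu1 : u 1 ∈ p) {i : ℕ} (hi : i ∈ Set.Icc 1 c) : u i ∈ p := by
  obtain ⟨⟨-, -, hchain, -⟩, -, hlast⟩ := hp
  have ht1 : t1 ∉ p := fun hmem => by
    have hne : t1 ≠ t := by
      have := h.terminals_pairwise_ne
      rcases ht with rfl | rfl <;> simp_all
    obtain ⟨y, -, hy⟩ := exists_rel_of_isChain_of_ne_getLast hchain hmem hlast hne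
    exact h.not_edge_t1 hy
  refine mem_of_isChain_of_forced_step hchain hlast hu1 (fun k hk => ?_)
    (fun k hk y hy hky => ?_) hi
  · have := h.u_notMem_terminals k ⟨hk.1, hk.2.le⟩
    grind
  · exact (h.eq_of_edge_u hk hky).resolve_right (fun hyt => ht1 (hyt ▸ hy))

theorem forall_u_mem_or_forall_v_mem (h : G.IsTwoRail c s1 s2 s3 t1 t1' t2 t3 u v)
    {p : List V} {s t : V} (hp : G.PathFrom p s t)
    (hs : s = s2 ∨ s = s3) (ht : t = t2 ∨ t = t3) :
    (∀ i ∈ Set.Icc 1 c, u i ∈ p) ∨ ∀ i ∈ Set.Icc 1 c, v i ∈ p := by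
  have hst : s ≠ t := by have := h.terminals_pairwise_ne; grind
  obtain ⟨y, hy, hsy⟩ := exists_rel_of_isChain_of_ne_getLast hp.1.2.2.1
    (List.mem_of_mem_head? hp.2.1) hp.2.2 hst
  rcases h.eq_of_edge_s2_or_s3 hs hsy with rfl | rfl
  · exact Or.inl fun i hi => h.u_mem_of_u_one_mem hp ht hy hi
  · exact Or.inr fun i hi => h.swap.u_mem_of_u_one_mem hp ht hy hi

theorem exists_u_mem (h : G.IsTwoRail c s1 s2 s3 t1 t1' t2 t3 u v)
    {p : List V} {s : V} (hp : G.PathFrom p s t1) (hs : s ≠ t1) :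
    ∃ i ∈ Set.Icc 1 c, u i ∈ p := by
  obtain ⟨w, hw, hwt⟩ := exists_rel_of_isChain_of_ne_head hp.1.2.2.1
    (List.mem_of_getLast? hp.2.2) hp.2.1 hs.symm
  obtain ⟨i, hi, rfl⟩ := h.exists_eq_u_of_edge_t1 hwt
  exact ⟨i, hi, hw⟩

end IsTwoRail

end Dgraph

theorem stmt12_general {V ι : Type*} [Finite ι] {c : ℕ} {G : Dgraph V}
    {s1 s2 s3 t1 t1' t2 t3 : V} {u v : ℕ → V}
    (hG : G.IsTwoRail c s1 s2 s3 t1 t1' t2 t3 u v) {P : ι → List V}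
    (hP : ∀ i, G.IsPath (P i)) (hcap : ∀ z ∈ G.verts, {i | z ∈ P i}.ncard ≤ c) {L : Set ι}
    (hL : ∀ i ∈ L, ((P i).head? = some s2 ∨ (P i).head? = some s3) ∧
      ((P i).getLast? = some t2 ∨ (P i).getLast? = some t3))
    {a b : ι} (haL : a ∉ L) (ha : G.PathFrom (P a) s1 t1)
    (hbL : b ∉ L) (hb : G.PathFrom (P b) s1 t1') : L.ncard + 2 ≤ 2 * c := by
  have hs1 : s1 ≠ t1 ∧ s1 ≠ t1' := by have := hG.terminals_pairwise_ne; grind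
  obtain ⟨i, hi, hui⟩ := hG.exists_u_mem ha hs1.1
  obtain ⟨j, hj, hvj⟩ := hG.swap.exists_u_mem hb hs1.2
  have hcover : L ⊆ {k | u i ∈ P k} ∪ {k | v j ∈ P k} := fun k hk => by
    obtain ⟨s, hs, hhead⟩ : ∃ s, (s = s2 ∨ s = s3) ∧ (P k).head? = some s := by
      simpa [or_and_right, exists_or] using (hL k hk).1
    obtain ⟨t, ht, hlast⟩ : ∃ t, (t = t2 ∨ t = t3) ∧ (P k).getLast? = some t := by
      simpa [or_and_right, exists_or] using (hL k hk).2
    exact (hG.forall_u_mem_or_forall_v_mem ⟨hP k, hhead, hlast⟩ hs ht).imp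
      (· i hi) (· j hj)
  have hcount := ncard_add_two_le_of_subset_union (Set.toFinite _) (Set.toFinite _) hcover
    hui haL hvj hbL
  have hcapu := hcap (u i) ((hP a).2.2.2 _ hui)
  have hcapv := hcap (v j) ((hP b).2.2.2 _ hvj)
  omega

/-- In the digraph consisting of the vertices
`s1, s2, s3, t1, t1', t2, t3, u 1, …, u c, v 1, …, v c` (pairwise distinct) with
exactly the prescribed edges, there is no family of `3c − 1` directed paths,
each vertex on at most `c` of them, where the first `2c − 1` paths run from
`s2`/`s3` to `t2`/`t3`, the last `c` run from `s1` to `t1` or `t1'`, and among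
the last `c` at least one ends at `t1` and at least one ends at `t1'`. -/
theorem stmt12 {V : Type*} (c : ℕ) (hc : 2 ≤ c) (G : Dgraph V)
    (s1 s2 s3 t1 t1' t2 t3 : V) (u v : ℕ → V)
    (hdist7 : List.Pairwise (· ≠ ·) [s1, s2, s3, t1, t1', t2, t3])
    (huinj : Set.InjOn u (Set.Icc 1 c)) (hvinj : Set.InjOn v (Set.Icc 1 c))
    (huv : ∀ i ∈ Set.Icc 1 c, ∀ j ∈ Set.Icc 1 c, u i ≠ v j)
    (hun : ∀ i ∈ Set.Icc 1 c, u i ∉ ({s1, s2, s3, t1, t1', t2, t3} : Set V))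
    (hvn : ∀ i ∈ Set.Icc 1 c, v i ∉ ({s1, s2, s3, t1, t1', t2, t3} : Set V))
    (hverts : G.verts = ({s1, s2, s3, t1, t1', t2, t3} : Set V) ∪
      u '' Set.Icc 1 c ∪ v '' Set.Icc 1 c)
    (hedges : ∀ z w : V, G.Edge z w ↔
      ((∃ i, 1 ≤ i ∧ i + 1 ≤ c ∧
          ((z = u i ∧ w = u (i + 1)) ∨ (z = v i ∧ w = v (i + 1)))) ∨
       ((z = s2 ∨ z = s3) ∧ (w = u 1 ∨ w = v 1)) ∨
       ((z = u c ∨ z = v c) ∧ (w = t2 ∨ w = t3)) ∨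
       (∃ i, 1 ≤ i ∧ i ≤ c ∧
          ((z = s1 ∧ (w = u i ∨ w = v i)) ∨ (z = u i ∧ w = t1) ∨
           (z = v i ∧ w = t1'))))) :
    ¬ ∃ P : Fin (3 * c - 1) → List V,
      (∀ idx, G.IsPath (P idx)) ∧
      (∀ z ∈ G.verts, {idx | z ∈ P idx}.ncard ≤ c) ∧
      (∀ idx : Fin (3 * c - 1), (idx : ℕ) < 2 * c - 1 →
        ((P idx).head? = some s2 ∨ (P idx).head? = some s3) ∧
        ((P idx).getLast? = some t2 ∨ (P idx).getLast? = some t3)) ∧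
      (∀ idx : Fin (3 * c - 1), 2 * c - 1 ≤ (idx : ℕ) →
        (P idx).head? = some s1 ∧
        ((P idx).getLast? = some t1 ∨ (P idx).getLast? = some t1')) ∧
      (∃ idx : Fin (3 * c - 1), 2 * c - 1 ≤ (idx : ℕ) ∧
        (P idx).getLast? = some t1) ∧
      (∃ idx : Fin (3 * c - 1), 2 * c - 1 ≤ (idx : ℕ) ∧
        (P idx).getLast? = some t1') := by
  rintro ⟨P, hP, hcap, hlong, hshort, ⟨a, ha, hat⟩, ⟨b, hb, hbt⟩⟩
  have hcount := stmt12_general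
    ⟨by omega, hdist7, huinj, hvinj, huv, hun, hvn, hverts, hedges⟩ hP hcap
    (L := {k | (k : ℕ) < 2 * c - 1}) hlong (not_lt.mpr ha) ⟨hP a, (hshort a ha).1, hat⟩
    (not_lt.mpr hb) ⟨hP b, (hshort b hb).1, hbt⟩
  have hcard : {k : Fin (3 * c - 1) | (k : ℕ) < 2 * c - 1}.ncard = 2 * c - 1 := by
    rw [Set.ncard_eq_toFinset_card', Set.toFinset_ofPred, Fin.card_filter_val_lt]
    omega
  omega
end
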